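/- Let A satisfy (H1), β_i ∈ (-2,0] for all i ∈ I with not all β_i equal to 0, and let u be a solution of the singular Liouville system. For λ > 0 define Σ_λ = {x ∈ ℝ² : x₁ > λ}, u_i^λ(x₁,x₂) = u_i(2λ−x₁, x₂), w_i^λ = u_i^λ − u_i on Σ_λ, f(x) = log log(|x|+3), and z_i^λ = w_i^λ / f. Then there exists R > 0 independent of λ such that for every λ > 0, if x₀ ∈ Σ_λ is a point where a negative minimum of min{z_1^λ,...,z_n^λ} over Σ_λ is attained, then |x₀| < R. -/

import Mathlib

open Set MeasureTheory

/-- Hypothesis (H1): symmetric, nonnegative entries, irreducible, invertible. -/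
def H1 {n : ℕ} (A : Matrix (Fin n) (Fin n) ℝ) : Prop :=
  A.IsSymm ∧ (∀ i j, 0 ≤ A i j) ∧
  (∀ S : Finset (Fin n), S.Nonempty → S ≠ Finset.univ → ∃ i ∈ S, ∃ j ∈ Sᶜ, A i j ≠ 0) ∧
  IsUnit A.det

/-- The Euclidean norm on ℝ². -/
noncomputable def nrm (x : ℝ × ℝ) : ℝ := Real.sqrt (x.1 ^ 2 + x.2 ^ 2)

/-- The Laplacian on ℝ²: sum of the two second partial derivatives. -/
noncomputable def lap (u : ℝ × ℝ → ℝ) (x : ℝ × ℝ) : ℝ :=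
  deriv (deriv (fun s => u (s, x.2))) x.1 + deriv (deriv (fun t => u (x.1, t))) x.2

/-- Solution (not necessarily radial) of the singular Liouville system on ℝ²
with the finite-energy condition. -/
def PDESolution {n : ℕ} (A : Matrix (Fin n) (Fin n) ℝ) (β : Fin n → ℝ)
    (u : Fin n → ℝ × ℝ → ℝ) : Prop :=
  (∀ i, Continuous (u i)) ∧
  (∀ i, ∀ x : ℝ × ℝ, x ≠ 0 → ContDiffAt ℝ 2 (u i) x) ∧
  (∀ i, ∀ x : ℝ × ℝ, x ≠ 0 →
      lap (u i) x + ∑ j, A i j * nrm x ^ β j * Real.exp (u j x) = 0) ∧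
  (∀ i, Integrable (fun x : ℝ × ℝ => nrm x ^ β i * Real.exp (u i x)))

open Filter Asymptotics Real Topology

/-!
In log-polar coordinates `x = e^t (cos θ, sin θ)` the functions `ψ_i = u_i + (2 + β_i) t` solve the
Liouville system without singular weights, and finite energy makes the integral of `∑ e^{ψ_i}` over
unit discs vanish as `t → ∞`. Heinz's ε-regularity estimate for `-Δρ ≤ C ρ²` then gives
`ψ_i → -∞`; superharmonicity (a three lines theorem) and Harnack's inequality improve this to
`ψ_i ≤ C - δ t`, that is `|x|^{β_i} e^{u_i} = O(|x|^{-2 - δ})`. Such a source is negligible against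
`-Δ log log (|x| + 3) ~ (|x| log |x|)⁻²`. If `z f` touches `w_i^λ` from below at a far point with
`z < 0`, then `Δ (w_i^λ - z f)` is therefore bounded above by a negative constant nearby, except
possibly at the reflected singularity, and a minimum principle valid across an isolated point
excludes this. The weight of the reflected solution is compared with the weight at `x` using
`β_j ≤ 0` and `|x^λ| ≤ |x|`.
-/

section Calculus

variable {E : Type*} [NormedAddCommGroup E] [NormedSpace ℝ E]

theorem hasDerivAt_deriv_comp {u : E → ℝ} {γ γ' : ℝ → E} {γ'' : E} {s : ℝ}
    (hu : ContDiffAt ℝ 2 u (γ s)) (hγ : ∀ r, HasDerivAt γ (γ' r) r)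
    (hγ' : HasDerivAt γ' γ'' s) :
    HasDerivAt (deriv fun r => u (γ r))
      (fderiv ℝ (fderiv ℝ u) (γ s) (γ' s) (γ' s) + fderiv ℝ u (γ s) γ'') s := by
  have hderiv : (deriv fun r => u (γ r)) =ᶠ[𝓝 s] fun r => fderiv ℝ u (γ r) (γ' r) := by
    filter_upwards [(hγ s).continuousAt.eventually (hu.eventually (by simp))] with r hr
    exact ((hr.differentiableAt (by simp)).hasFDerivAt.comp_hasDerivAt r (hγ r)).deriv
  have hfderiv : HasFDerivAt (fderiv ℝ u) (fderiv ℝ (fderiv ℝ u) (γ s)) (γ s) :=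
    ((hu.fderiv_right (m := 1) (by norm_num)).differentiableAt (by simp)).hasFDerivAt
  exact ((hfderiv.comp_hasDerivAt s (hγ s)).clm_apply hγ').congr_of_eventuallyEq hderiv

theorem deriv_deriv_exp_comp {f : ℝ → ℝ} {a : ℝ} (hf : ContDiffAt ℝ 2 f a) :
    deriv (deriv fun s => exp (f s)) a = exp (f a) * (deriv (deriv f) a + deriv f a ^ 2) := by
  have hderiv : (deriv fun s => exp (f s)) =ᶠ[𝓝 a] fun s => exp (f s) * deriv f s := by
    filter_upwards [hf.eventually (by simp)] with s hs
    exact (hs.differentiableAt (by simp)).hasDerivAt.exp.deriv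
  have hfderiv : DifferentiableAt ℝ (fderiv ℝ f) a :=
    (hf.fderiv_right (m := 1) (by norm_num)).differentiableAt (by simp)
  have hf' : HasDerivAt (deriv f) (deriv (deriv f) a) a :=
    (hfderiv.clm_apply (differentiableAt_const 1)).hasDerivAt
  have h := ((hf.differentiableAt (by simp)).hasDerivAt.exp.mul hf').congr_of_eventuallyEq hderiv
  rw [h.deriv]
  ring

theorem deriv_deriv_nonneg_of_isLocalMin {f : ℝ → ℝ} {a : ℝ} (hf : ContinuousAt f a)
    (hmin : IsLocalMin f a) : 0 ≤ deriv (deriv f) a := by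
  by_contra! hneg
  have hmax := isLocalMax_of_deriv_deriv_neg hneg hmin.deriv_eq_zero hf
  have hconst : f =ᶠ[𝓝 a] fun _ => f a := by
    filter_upwards [hmin, hmax] with s hle hge using le_antisymm hge hle
  simp [hconst.deriv.deriv_eq] at hneg

theorem deriv_deriv_quadratic (a b c x : ℝ) :
    deriv (deriv fun t : ℝ => a * t ^ 2 + b * t + c) x = 2 * a := by
  have hderiv : (deriv fun t : ℝ => a * t ^ 2 + b * t + c) = fun t => 2 * a * t + b := by
    funext t
    have h := (((hasDerivAt_pow 2 t).const_mul a).add ((hasDerivAt_id t).const_mul b)).add_const c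
    exact h.deriv.trans (by norm_num; ring)
  rw [hderiv]
  exact (((hasDerivAt_id x).const_mul (2 * a)).add_const b).deriv.trans (mul_one _)

theorem hasDerivAt_intervalIntegral_of_continuous {F F' : ℝ → ℝ → E} (a b : ℝ)
    (hF : Continuous (Function.uncurry F)) (hF' : Continuous (Function.uncurry F'))
    (hderiv : ∀ r θ, HasDerivAt (fun r => F r θ) (F' r θ) r) (r : ℝ) :
    HasDerivAt (fun r => ∫ θ in a..b, F r θ) (∫ θ in a..b, F' r θ) r := by
  have hcompact : IsCompact (Icc (r - 1) (r + 1) ×ˢ uIcc a b) := isCompact_Icc.prod isCompact_uIcc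
  obtain ⟨C, hC⟩ := hcompact.exists_bound_of_continuousOn hF'.continuousOn
  have hFr (r : ℝ) : Continuous (F r) := hF.comp (.prodMk_right r)
  have hF'r : Continuous (F' r) := hF'.comp (.prodMk_right r)
  exact (intervalIntegral.hasDerivAt_integral_of_dominated_loc_of_deriv_le
    (Icc_mem_nhds (by linarith) (by linarith)) (.of_forall fun r => (hFr r).aestronglyMeasurable)
    ((hFr r).intervalIntegrable _ _) hF'r.aestronglyMeasurable
    (.of_forall fun θ hθ x hx => hC (x, θ) ⟨hx, uIoc_subset_uIcc hθ⟩)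
    intervalIntegrable_const (.of_forall fun θ _ x _ => hderiv x θ)).2

end Calculus

section Norm

theorem nrm_nonneg (x : ℝ × ℝ) : 0 ≤ nrm x := Real.sqrt_nonneg _

theorem nrm_sq (x : ℝ × ℝ) : nrm x ^ 2 = x.1 ^ 2 + x.2 ^ 2 := Real.sq_sqrt (by positivity)

theorem nrm_zero : nrm 0 = 0 := by simp [nrm]

theorem nrm_pos {x : ℝ × ℝ} (hx : x ≠ 0) : 0 < nrm x := by
  refine Real.sqrt_pos.2 ?_
  contrapose! hx
  ext <;> simp only [Prod.fst_zero, Prod.snd_zero] <;> nlinarith [sq_nonneg x.1, sq_nonneg x.2]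

theorem continuous_nrm : Continuous nrm := by
  unfold nrm
  fun_prop

theorem nrm_eq_norm_complex (x : ℝ × ℝ) : nrm x = ‖(⟨x.1, x.2⟩ : ℂ)‖ := by
  rw [Complex.norm_def, Complex.normSq_mk, nrm, sq, sq]

theorem nrm_add_le (x y : ℝ × ℝ) : nrm (x + y) ≤ nrm x + nrm y := by
  simp only [nrm_eq_norm_complex]
  exact norm_add_le (⟨x.1, x.2⟩ : ℂ) ⟨y.1, y.2⟩

theorem norm_le_nrm (x : ℝ × ℝ) : ‖x‖ ≤ nrm x :=
  max_le (Real.abs_le_sqrt (by nlinarith [sq_nonneg x.2]))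
    (Real.abs_le_sqrt (by nlinarith [sq_nonneg x.1]))

theorem nrm_sub_le_of_le {x y z : ℝ × ℝ} {r s : ℝ} (hxy : nrm (x - y) ≤ r)
    (hyz : nrm (y - z) ≤ s) : nrm (x - z) ≤ r + s := by
  rw [← sub_add_sub_cancel x y z]
  exact (nrm_add_le _ _).trans (add_le_add hxy hyz)

theorem nrm_sub_lt_of_lt_of_le {x y z : ℝ × ℝ} {r s : ℝ} (hxy : nrm (x - y) < r)
    (hyz : nrm (y - z) ≤ s) : nrm (x - z) < r + s :=
  (nrm_sub_le_of_le le_rfl hyz).trans_lt (by gcongr)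

/-- The open Euclidean disc of radius `s` about `y`; `Metric.ball` on `ℝ × ℝ` would be a square. -/
def disc (y : ℝ × ℝ) (s : ℝ) : Set (ℝ × ℝ) := {x | nrm (x - y) < s}

theorem isOpen_disc (y : ℝ × ℝ) (s : ℝ) : IsOpen (disc y s) :=
  isOpen_lt (continuous_nrm.comp (by fun_prop)) continuous_const

theorem isCompact_setOf_nrm_sub_le (y : ℝ × ℝ) (s : ℝ) : IsCompact {x | nrm (x - y) ≤ s} :=
  (isCompact_closedBall y s).of_isClosed_subset
    (isClosed_le (continuous_nrm.comp (by fun_prop)) continuous_const)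
    fun x hx => mem_closedBall_iff_norm.2 ((norm_le_nrm _).trans hx)

theorem integrableOn_disc {g : ℝ × ℝ → ℝ} (hg : Continuous g) (y : ℝ × ℝ) (s : ℝ) :
    IntegrableOn g (disc y s) :=
  (hg.continuousOn.integrableOn_compact (isCompact_setOf_nrm_sub_le y s)).mono_set
    fun x (hx : nrm (x - y) < s) => hx.le

theorem abs_fst_sub_le_of_nrm_sub_le {x y : ℝ × ℝ} {s : ℝ} (h : nrm (x - y) ≤ s) :
    |x.1 - y.1| ≤ s :=
  (norm_fst_le (x - y)).trans ((norm_le_nrm _).trans h)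

theorem abs_snd_sub_le_of_nrm_sub_le {x y : ℝ × ℝ} {s : ℝ} (h : nrm (x - y) ≤ s) :
    |x.2 - y.2| ≤ s :=
  (norm_snd_le (x - y)).trans ((norm_le_nrm _).trans h)

end Norm

section Laplacian

variable {u v : ℝ × ℝ → ℝ} {x : ℝ × ℝ}

theorem contDiffAt_fst_slice (hu : ContDiffAt ℝ 2 u x) :
    ContDiffAt ℝ 2 (fun s => u (s, x.2)) x.1 :=
  ContDiffAt.comp (f := fun s : ℝ => (s, x.2)) x.1 hu (by fun_prop)

theorem contDiffAt_snd_slice (hu : ContDiffAt ℝ 2 u x) :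
    ContDiffAt ℝ 2 (fun t => u (x.1, t)) x.2 :=
  ContDiffAt.comp (f := fun t : ℝ => (x.1, t)) x.2 hu (by fun_prop)

theorem lap_eq_iteratedDeriv (u : ℝ × ℝ → ℝ) (x : ℝ × ℝ) :
    lap u x = iteratedDeriv 2 (fun s => u (s, x.2)) x.1 +
      iteratedDeriv 2 (fun t => u (x.1, t)) x.2 := by
  simp only [lap, iteratedDeriv_succ, iteratedDeriv_zero]

theorem lap_eq_fderiv (hu : ContDiffAt ℝ 2 u x) :
    lap u x = fderiv ℝ (fderiv ℝ u) x (1, 0) (1, 0) + fderiv ℝ (fderiv ℝ u) x (0, 1) (0, 1) := by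
  have hfst := hasDerivAt_deriv_comp (γ := fun s => (s, x.2)) (s := x.1) hu
    (fun r => (hasDerivAt_id r).prodMk (hasDerivAt_const r x.2)) (hasDerivAt_const _ _)
  have hsnd := hasDerivAt_deriv_comp (γ := fun t => (x.1, t)) (s := x.2) hu
    (fun r => (hasDerivAt_const r x.1).prodMk (hasDerivAt_id r)) (hasDerivAt_const _ _)
  simp only [lap, hfst.deriv, hsnd.deriv, map_zero, add_zero]

theorem lap_add (hu : ContDiffAt ℝ 2 u x) (hv : ContDiffAt ℝ 2 v x) :
    lap (fun y => u y + v y) x = lap u x + lap v x := by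
  simp only [lap_eq_iteratedDeriv]
  rw [iteratedDeriv_fun_add (contDiffAt_fst_slice hu) (contDiffAt_fst_slice hv),
    iteratedDeriv_fun_add (contDiffAt_snd_slice hu) (contDiffAt_snd_slice hv)]
  ring

theorem lap_const_mul (c : ℝ) (u : ℝ × ℝ → ℝ) (x : ℝ × ℝ) :
    lap (fun y => c * u y) x = c * lap u x := by
  simp only [lap_eq_iteratedDeriv, iteratedDeriv_const_mul_field, mul_add]

theorem lap_neg (u : ℝ × ℝ → ℝ) (x : ℝ × ℝ) : lap (fun y => -u y) x = -lap u x := by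
  simpa only [neg_one_mul] using lap_const_mul (-1) u x

theorem lap_sub (hu : ContDiffAt ℝ 2 u x) (hv : ContDiffAt ℝ 2 v x) :
    lap (fun y => u y - v y) x = lap u x - lap v x := by
  simp only [sub_eq_add_neg]
  rw [lap_add hu hv.neg, lap_neg]

theorem lap_sum {ι : Type*} {s : Finset ι} {u : ι → ℝ × ℝ → ℝ}
    (hu : ∀ i ∈ s, ContDiffAt ℝ 2 (u i) x) :
    lap (fun y => ∑ i ∈ s, u i y) x = ∑ i ∈ s, lap (u i) x := by
  simp only [lap_eq_iteratedDeriv]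
  rw [iteratedDeriv_fun_sum fun i hi => contDiffAt_fst_slice (hu i hi),
    iteratedDeriv_fun_sum fun i hi => contDiffAt_snd_slice (hu i hi), Finset.sum_add_distrib]

theorem lap_comp_fst (p : ℝ → ℝ) (x : ℝ × ℝ) :
    lap (fun y => p y.1) x = deriv (deriv p) x.1 := by
  simp [lap]

theorem lap_const_mul_nrm_sub_sq (c : ℝ) (y x : ℝ × ℝ) :
    lap (fun z => c * nrm (z - y) ^ 2) x = 4 * c := by
  have hfst : (fun s => nrm ((s, x.2) - y) ^ 2) =
      fun s => 1 * s ^ 2 + (-2 * y.1) * s + (y.1 ^ 2 + (x.2 - y.2) ^ 2) := by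
    funext s
    simp only [nrm_sq, Prod.fst_sub, Prod.snd_sub]
    ring
  have hsnd : (fun t => nrm ((x.1, t) - y) ^ 2) =
      fun t => 1 * t ^ 2 + (-2 * y.2) * t + (y.2 ^ 2 + (x.1 - y.1) ^ 2) := by
    funext t
    simp only [nrm_sq, Prod.fst_sub, Prod.snd_sub]
    ring
  rw [lap_const_mul, lap, hfst, hsnd, deriv_deriv_quadratic, deriv_deriv_quadratic]
  ring

theorem contDiff_const_mul_nrm_sub_sq (c : ℝ) (y : ℝ × ℝ) :
    ContDiff ℝ 2 fun z => c * nrm (z - y) ^ 2 := by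
  simp only [nrm_sq]
  fun_prop

theorem exp_mul_lap_le_lap_exp (hu : ContDiffAt ℝ 2 u x) :
    exp (u x) * lap u x ≤ lap (fun y => exp (u y)) x := by
  rw [lap, lap, deriv_deriv_exp_comp (contDiffAt_fst_slice hu),
    deriv_deriv_exp_comp (contDiffAt_snd_slice hu), mul_add]
  gcongr <;> exact le_add_of_nonneg_right (sq_nonneg _)

theorem lap_nonneg_of_isLocalMin (hu : ContinuousAt u x) (hmin : IsLocalMin u x) :
    0 ≤ lap u x := by
  have hfst : Tendsto (fun s : ℝ => (s, x.2)) (𝓝 x.1) (𝓝 x) :=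
    Continuous.tendsto' (by fun_prop) _ _ rfl
  have hsnd : Tendsto (fun t : ℝ => (x.1, t)) (𝓝 x.2) (𝓝 x) :=
    Continuous.tendsto' (by fun_prop) _ _ rfl
  exact add_nonneg
    (deriv_deriv_nonneg_of_isLocalMin (hu.tendsto.comp hfst) (hfst.eventually hmin))
    (deriv_deriv_nonneg_of_isLocalMin (hu.tendsto.comp hsnd) (hsnd.eventually hmin))

theorem bilin_rotation_add (B : ℝ × ℝ →L[ℝ] ℝ × ℝ →L[ℝ] ℝ) (a b : ℝ) :
    B (a, b) (a, b) + B (-b, a) (-b, a) =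
      (a ^ 2 + b ^ 2) * (B (1, 0) (1, 0) + B (0, 1) (0, 1)) := by
  have hbasis (a b : ℝ) : ((a, b) : ℝ × ℝ) = a • (1, 0) + b • (0, 1) := by simp
  rw [hbasis a b, hbasis (-b) a]
  simp only [map_add, map_smul, add_apply, smul_apply, smul_eq_mul]
  ring

end Laplacian

section LogPolar

/-- Log-polar coordinates about `c`: the point at distance `exp q.1` from `c` in direction `q.2`.
This map is conformal, and it turns circles about `c` into vertical lines. -/
noncomputable def logPolar (c q : ℝ × ℝ) : ℝ × ℝ := c + polarCoord.symm (exp q.1, q.2)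

theorem nrm_polarCoord_symm (p : ℝ × ℝ) : nrm (polarCoord.symm p) = |p.1| := by
  rw [nrm, polarCoord_symm_apply, ← Real.sqrt_sq_eq_abs]
  congr 1
  linear_combination p.1 ^ 2 * Real.sin_sq_add_cos_sq p.2

theorem nrm_logPolar_sub (c q : ℝ × ℝ) : nrm (logPolar c q - c) = exp q.1 := by
  rw [logPolar, add_sub_cancel_left, nrm_polarCoord_symm, Real.abs_exp]

theorem nrm_logPolar_zero (q : ℝ × ℝ) : nrm (logPolar 0 q) = exp q.1 := by
  simpa only [sub_zero] using nrm_logPolar_sub 0 q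

theorem logPolar_ne (c q : ℝ × ℝ) : logPolar c q ≠ c := by
  intro h
  have hexp := nrm_logPolar_sub c q
  rw [h, sub_self, nrm_zero] at hexp
  exact (exp_pos q.1).ne hexp

theorem contDiff_logPolar (c : ℝ × ℝ) : ContDiff ℝ 2 (logPolar c) := by
  unfold logPolar
  simp only [polarCoord_symm_apply]
  fun_prop

theorem logPolar_add_two_pi (c : ℝ × ℝ) (t θ : ℝ) :
    logPolar c (t, θ + 2 * π) = logPolar c (t, θ) := by
  simp only [logPolar, polarCoord_symm_apply, cos_add_two_pi, sin_add_two_pi]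

theorem exists_logPolar_zero_eq {x : ℝ × ℝ} (hx : x ≠ 0) : ∃ q, logPolar 0 q = x := by
  have hnorm : exp (log (nrm x)) = ‖(⟨x.1, x.2⟩ : ℂ)‖ := by
    rw [exp_log (nrm_pos hx), nrm_eq_norm_complex]
  refine ⟨(log (nrm x), Complex.arg ⟨x.1, x.2⟩), ?_⟩
  simp [logPolar, polarCoord_symm_apply, hnorm]

theorem tendsto_logPolar_atBot (c : ℝ × ℝ) :
    Tendsto (logPolar c) (comap Prod.fst atBot) (𝓝[≠] c) := by
  refine tendsto_nhdsWithin_iff.2 ⟨?_, .of_forall (logPolar_ne c)⟩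
  refine tendsto_iff_norm_sub_tendsto_zero.2 <| squeeze_zero (fun _ => norm_nonneg _)
    (fun q => (norm_le_nrm _).trans_eq (nrm_logPolar_sub c q)) ?_
  exact tendsto_exp_atBot.comp tendsto_comap

theorem lap_comp_logPolar {u : ℝ × ℝ → ℝ} {c q : ℝ × ℝ}
    (hu : ContDiffAt ℝ 2 u (logPolar c q)) :
    lap (fun p => u (logPolar c p)) q = exp (2 * q.1) * lap u (logPolar c q) := by
  have hradial (s : ℝ) : HasDerivAt (fun s => polarCoord.symm (exp s, q.2))
      (polarCoord.symm (exp s, q.2)) s := by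
    simp only [polarCoord_symm_apply]
    exact ((Real.hasDerivAt_exp s).mul_const _).prodMk ((Real.hasDerivAt_exp s).mul_const _)
  have hangular (θ : ℝ) : HasDerivAt (fun θ => polarCoord.symm (exp q.1, θ))
      (-(exp q.1 * sin θ), exp q.1 * cos θ) θ := by
    simpa only [polarCoord_symm_apply, mul_neg] using
      ((hasDerivAt_cos θ).const_mul _).prodMk ((hasDerivAt_sin θ).const_mul _)
  have hangular' (θ : ℝ) : HasDerivAt (fun θ => (-(exp q.1 * sin θ), exp q.1 * cos θ))
      (-polarCoord.symm (exp q.1, θ)) θ := by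
    simp only [polarCoord_symm_apply, Prod.neg_mk]
    simpa only [mul_neg] using
      ((hasDerivAt_sin θ).const_mul (exp q.1)).fun_neg.prodMk
        ((hasDerivAt_cos θ).const_mul (exp q.1))
  have hfst := hasDerivAt_deriv_comp (γ := fun s => logPolar c (s, q.2)) (s := q.1) hu
    (fun s => (hradial s).const_add c) (hradial q.1)
  have hsnd := hasDerivAt_deriv_comp (γ := fun θ => logPolar c (q.1, θ)) (s := q.2) hu
    (fun θ => (hangular θ).const_add c) (hangular' q.2)
  have hexp : (exp q.1 * cos q.2) ^ 2 + (exp q.1 * sin q.2) ^ 2 = exp (2 * q.1) := by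
    rw [two_mul, exp_add]
    linear_combination exp q.1 ^ 2 * sin_sq_add_cos_sq q.2
  rw [lap, hfst.deriv, hsnd.deriv, lap_eq_fderiv hu, map_neg, add_add_add_comm, add_neg_cancel,
    add_zero, ← hexp, ← bilin_rotation_add, polarCoord_symm_apply]

end LogPolar

section MinimumPrinciple

theorem nonneg_of_lap_neg_of_periodic {K : ℝ × ℝ → ℝ} {a b : ℝ}
    (hcont : ContinuousOn K (Icc a b ×ˢ univ)) (hlap : ∀ q, q.1 ∈ Ioo a b → lap K q < 0)
    (hper : ∀ t, Function.Periodic (fun θ => K (t, θ)) (2 * π))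
    (ha : ∀ θ, 0 ≤ K (a, θ)) (hb : ∀ θ, 0 ≤ K (b, θ)) {q : ℝ × ℝ} (hq : q.1 ∈ Icc a b) :
    0 ≤ K q := by
  have hcompact : IsCompact (Icc a b ×ˢ Icc 0 (2 * π)) := isCompact_Icc.prod isCompact_Icc
  obtain ⟨p, ⟨hp, -⟩, hpmin⟩ := hcompact.exists_isMinOn
    ⟨(q.1, 0), hq, le_rfl, two_pi_pos.le⟩ (hcont.mono (prod_mono_right (subset_univ _)))
  have hmin (x : ℝ × ℝ) (hx : x.1 ∈ Icc a b) : K p ≤ K x := by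
    obtain ⟨θ, hθ, hKθ⟩ := (hper x.1).exists_mem_Ico₀ two_pi_pos x.2
    rw [show K x = K (x.1, θ) from hKθ]
    exact hpmin ⟨hx, hθ.1, hθ.2.le⟩
  refine le_trans ?_ (hmin q hq)
  rcases hp.1.eq_or_lt with hpa | hpa
  · simpa only [hpa] using ha p.2
  rcases hp.2.eq_or_lt with hpb | hpb
  · simpa only [← hpb] using hb p.2
  have hstrip : Icc a b ×ˢ univ ∈ 𝓝 p := prod_mem_nhds (Icc_mem_nhds hpa hpb) univ_mem
  have hlocal : IsLocalMin K p := by filter_upwards [hstrip] with x hx using hmin x hx.1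
  exact absurd (hlap p ⟨hpa, hpb⟩)
    (lap_nonneg_of_isLocalMin (hcont.continuousAt hstrip) hlocal).not_gt

theorem three_lines_of_lap_nonpos {H : ℝ × ℝ → ℝ} {a b α γ : ℝ}
    (hcont : ContinuousOn H (Icc a b ×ˢ univ))
    (hC2 : ∀ q, q.1 ∈ Ioo a b → ContDiffAt ℝ 2 H q) (hlap : ∀ q, q.1 ∈ Ioo a b → lap H q ≤ 0)
    (hper : ∀ t, Function.Periodic (fun θ => H (t, θ)) (2 * π))
    (ha : ∀ θ, α ≤ H (a, θ)) (hb : ∀ θ, γ ≤ H (b, θ)) {q : ℝ × ℝ} (hq : q.1 ∈ Icc a b) :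
    α * (b - q.1) + γ * (q.1 - a) ≤ (b - a) * H q := by
  have hab : 0 ≤ b - a := sub_nonneg.2 (hq.1.trans hq.2)
  -- The quadratic term of `p ε` makes the comparison function strictly superharmonic.
  let p (ε t : ℝ) : ℝ :=
    -ε * t ^ 2 + (ε * (a + b) + α - γ) * t + (γ * a - α * b - ε * (a * b))
  have hperturbed (ε : ℝ) (hε : 0 < ε) : 0 ≤ (b - a) * H q + p ε q.1 := by
    refine nonneg_of_lap_neg_of_periodic (K := fun q => (b - a) * H q + p ε q.1)
      ((continuousOn_const.mul hcont).add (by fun_prop)) (fun q hq => ?_) (fun t θ => ?_)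
      (fun θ => ?_) (fun θ => ?_) hq
    · rw [lap_add (contDiffAt_const.mul (hC2 q hq)) (by fun_prop), lap_const_mul,
        lap_comp_fst (p ε), deriv_deriv_quadratic]
      nlinarith [mul_nonneg hab (neg_nonneg.2 (hlap q hq))]
    · simp only [hper t θ]
    · nlinarith [mul_nonneg hab (sub_nonneg.2 (ha θ))]
    · nlinarith [mul_nonneg hab (sub_nonneg.2 (hb θ))]
  have hlim : Tendsto (fun ε => (b - a) * H q + p ε q.1) (𝓝[>] 0)
      (𝓝 ((b - a) * H q + p 0 q.1)) :=
    (Continuous.tendsto (by fun_prop) 0).mono_left nhdsWithin_le_nhds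
  have hle := ge_of_tendsto hlim (eventually_nhdsWithin_of_forall hperturbed)
  simp only [p] at hle
  linarith

theorem pos_of_lap_le_neg_of_punctured {g : ℝ × ℝ → ℝ} {x₀ : ℝ × ℝ} {c : ℝ} (hc : 0 < c)
    (hcont : ContinuousAt g x₀) (hnonneg : ∀ᶠ x in 𝓝 x₀, 0 ≤ g x)
    (hlap : ∀ᶠ x in 𝓝[≠] x₀, ContDiffAt ℝ 2 g x ∧ lap g x ≤ -c) : 0 < g x₀ := by
  have hnear : ∀ᶠ q in comap Prod.fst atBot, 0 ≤ g (logPolar x₀ q) ∧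
      ContDiffAt ℝ 2 g (logPolar x₀ q) ∧ lap g (logPolar x₀ q) ≤ -c :=
    (tendsto_logPolar_atBot x₀).eventually ((hnonneg.filter_mono nhdsWithin_le_nhds).and hlap)
  obtain ⟨t₀, -, ht₀⟩ := (atBot_basis.comap Prod.fst).eventually_iff.1 hnear
  set G : ℝ × ℝ → ℝ := fun x => g x + c / 4 * nrm (x - x₀) ^ 2 with hG
  have hGC2 (q : ℝ × ℝ) (hq : q.1 ≤ t₀) : ContDiffAt ℝ 2 G (logPolar x₀ q) :=
    (ht₀ hq).2.1.add (contDiff_const_mul_nrm_sub_sq _ _).contDiffAt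
  have hHC2 (q : ℝ × ℝ) (hq : q.1 ≤ t₀) : ContDiffAt ℝ 2 (fun q => G (logPolar x₀ q)) q :=
    (hGC2 q hq).comp q (contDiff_logPolar x₀).contDiffAt
  have hHlap (q : ℝ × ℝ) (hq : q.1 ≤ t₀) : lap (fun q => G (logPolar x₀ q)) q ≤ 0 := by
    rw [lap_comp_logPolar (hGC2 q hq), lap_add (ht₀ hq).2.1
      (contDiff_const_mul_nrm_sub_sq _ _).contDiffAt, lap_const_mul_nrm_sub_sq]
    exact mul_nonpos_of_nonneg_of_nonpos (exp_pos _).le (by linarith [(ht₀ hq).2.2])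
  set m := c / 4 * exp t₀ ^ 2
  have hlower (t : ℝ) (ht : t < t₀) : m / 2 ≤ G (logPolar x₀ (t, 0)) := by
    have hinterp := three_lines_of_lap_nonpos (a := 2 * t - t₀) (b := t₀) (α := 0) (γ := m)
      (q := (t, 0)) (fun q hq => (hHC2 q hq.1.2).continuousAt.continuousWithinAt)
      (fun q hq => hHC2 q hq.2.le) (fun q hq => hHlap q hq.2.le)
      (fun t θ => by simp only [logPolar_add_two_pi])
      (fun θ => add_nonneg (ht₀ (show 2 * t - t₀ ≤ t₀ by linarith)).1 (by positivity))
      (fun θ => by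
        simp only [hG, nrm_logPolar_sub]
        exact le_add_of_nonneg_left (ht₀ (le_refl t₀)).1)
      ⟨by simp only; linarith, ht.le⟩
    nlinarith
  have hlim : Tendsto (fun t => G (logPolar x₀ (t, 0))) atBot (𝓝 (G x₀)) := by
    have hGcont : ContinuousAt G x₀ :=
      hcont.add (contDiff_const_mul_nrm_sub_sq _ _).continuous.continuousAt
    have hline : Tendsto (fun t : ℝ => (t, (0 : ℝ))) atBot (comap Prod.fst atBot) :=
      tendsto_comap_iff.2 tendsto_id
    exact hGcont.tendsto.comp
      ((tendsto_logPolar_atBot x₀).mono_right nhdsWithin_le_nhds |>.comp hline)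
  have hm : 0 < m := by positivity
  have hle := ge_of_tendsto hlim ((eventually_lt_atBot t₀).mono hlower)
  simp only [hG, sub_self, nrm_zero] at hle
  linarith

end MinimumPrinciple

section MeanValue

variable {g : ℝ × ℝ → ℝ} {y : ℝ × ℝ} {s : ℝ}

theorem hasDerivAt_polarCoord_symm_radius (y : ℝ × ℝ) (r θ : ℝ) :
    HasDerivAt (fun r => y + polarCoord.symm (r, θ)) (cos θ, sin θ) r := by
  simp only [polarCoord_symm_apply]
  simpa only [id, one_mul] using
    (((hasDerivAt_id r).mul_const (cos θ)).prodMk ((hasDerivAt_id r).mul_const (sin θ))).const_add y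

theorem hasDerivAt_polarCoord_symm_angle (y : ℝ × ℝ) (r θ : ℝ) :
    HasDerivAt (fun θ => y + polarCoord.symm (r, θ)) (r • (-sin θ, cos θ)) θ := by
  simp only [polarCoord_symm_apply]
  exact (((hasDerivAt_cos θ).const_mul r).prodMk ((hasDerivAt_sin θ).const_mul r)).const_add y

/-- The integral of `g` over the circle of radius `r` about `y` with respect to the angle, that is
`2 * π` times the circular mean. -/
noncomputable def angularIntegral (g : ℝ × ℝ → ℝ) (y : ℝ × ℝ) (r : ℝ) : ℝ :=
  ∫ θ in -π..π, g (y + polarCoord.symm (r, θ))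

theorem angularIntegral_zero (g : ℝ × ℝ → ℝ) (y : ℝ × ℝ) :
    angularIntegral g y 0 = 2 * π * g y := by
  have hcentre (θ : ℝ) : y + polarCoord.symm (0, θ) = y := by
    ext <;> simp [polarCoord_symm_apply]
  simp only [angularIntegral, hcentre, intervalIntegral.integral_const, smul_eq_mul]
  ring

theorem hasDerivAt_angularIntegral (hg : ContDiff ℝ 1 g) (y : ℝ × ℝ) (r : ℝ) :
    HasDerivAt (angularIntegral g y)
      (∫ θ in -π..π, fderiv ℝ g (y + polarCoord.symm (r, θ)) (cos θ, sin θ)) r := by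
  have hcont := hg.continuous
  exact hasDerivAt_intervalIntegral_of_continuous _ _ (by fun_prop) (by fun_prop)
    (fun r θ => (hg.differentiable (by simp) _).hasFDerivAt.comp_hasDerivAt r
      (hasDerivAt_polarCoord_symm_radius y r θ)) r

/-- Integration by parts in the angle. -/
theorem integral_fderiv_radial (hg : ContDiff ℝ 2 g) (y : ℝ × ℝ) (r : ℝ) :
    ∫ θ in -π..π, fderiv ℝ g (y + polarCoord.symm (r, θ)) (cos θ, sin θ) =
      ∫ θ in -π..π, r * fderiv ℝ (fderiv ℝ g) (y + polarCoord.symm (r, θ))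
        (-sin θ, cos θ) (-sin θ, cos θ) := by
  have hg' : ContDiff ℝ 1 (fderiv ℝ g) := hg.fderiv_right (by norm_num)
  have hcont' := hg'.continuous
  have hderiv (θ : ℝ) : HasDerivAt
      (fun θ => fderiv ℝ g (y + polarCoord.symm (r, θ)) (-sin θ, cos θ))
      (r * fderiv ℝ (fderiv ℝ g) (y + polarCoord.symm (r, θ)) (-sin θ, cos θ) (-sin θ, cos θ) -
        fderiv ℝ g (y + polarCoord.symm (r, θ)) (cos θ, sin θ)) θ := by
    have htangent : HasDerivAt (fun θ => (-sin θ, cos θ)) (-(cos θ, sin θ)) θ :=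
      (hasDerivAt_sin θ).neg.prodMk (hasDerivAt_cos θ)
    simpa only [Function.comp_apply, map_smul, smul_apply, smul_eq_mul, map_neg,
      ← sub_eq_add_neg] using
      ((hg'.differentiable (by simp) _).hasFDerivAt.comp_hasDerivAt θ
        (hasDerivAt_polarCoord_symm_angle y r θ)).clm_apply htangent
  have hFTC := intervalIntegral.integral_eq_sub_of_hasDerivAt (a := -π) (b := π)
    (fun θ _ => hderiv θ) (Continuous.intervalIntegrable (by fun_prop) _ _)
  rw [intervalIntegral.integral_sub (Continuous.intervalIntegrable (by fun_prop) _ _)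
    (Continuous.intervalIntegrable (by fun_prop) _ _)] at hFTC
  simp only [polarCoord_symm_apply, cos_neg, sin_neg, cos_pi, sin_pi, neg_zero, mul_zero,
    sub_self] at hFTC
  exact (sub_eq_zero.1 hFTC).symm

theorem hasDerivAt_mul_deriv_angularIntegral (hg : ContDiff ℝ 2 g) (y : ℝ × ℝ) (r : ℝ) :
    HasDerivAt (fun r => r * deriv (angularIntegral g y) r)
      (r * angularIntegral (lap g) y r) r := by
  have hg' : ContDiff ℝ 1 (fderiv ℝ g) := hg.fderiv_right (by norm_num)
  have hcont' := hg'.continuous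
  have hderiv : deriv (angularIntegral g y) = fun r =>
      ∫ θ in -π..π, fderiv ℝ g (y + polarCoord.symm (r, θ)) (cos θ, sin θ) :=
    funext fun r => (hasDerivAt_angularIntegral (hg.of_le one_le_two) y r).deriv
  have hderiv2 := hasDerivAt_intervalIntegral_of_continuous (-π) π
    (F := fun r θ => fderiv ℝ g (y + polarCoord.symm (r, θ)) (cos θ, sin θ))
    (F' := fun r θ => fderiv ℝ (fderiv ℝ g) (y + polarCoord.symm (r, θ))
      (cos θ, sin θ) (cos θ, sin θ)) (by fun_prop) (by fun_prop) (fun r θ => by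
        simpa only [Function.comp_apply, map_zero, add_zero] using
          ((hg'.differentiable (by simp) _).hasFDerivAt.comp_hasDerivAt r
            (hasDerivAt_polarCoord_symm_radius y r θ)).clm_apply (hasDerivAt_const r _)) r
  have hlap (θ : ℝ) : lap g (y + polarCoord.symm (r, θ)) =
      fderiv ℝ (fderiv ℝ g) (y + polarCoord.symm (r, θ)) (cos θ, sin θ) (cos θ, sin θ) +
        fderiv ℝ (fderiv ℝ g) (y + polarCoord.symm (r, θ)) (-sin θ, cos θ) (-sin θ, cos θ) := by
    rw [lap_eq_fderiv hg.contDiffAt, bilin_rotation_add, cos_sq_add_sin_sq, one_mul]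
  rw [hderiv]
  refine ((hasDerivAt_id r).mul hderiv2).congr_deriv ?_
  simp only [id, one_mul]
  rw [integral_fderiv_radial hg, angularIntegral, intervalIntegral.integral_const_mul, ← mul_add,
    ← intervalIntegral.integral_add (Continuous.intervalIntegrable (by fun_prop) _ _)
      (Continuous.intervalIntegrable (by fun_prop) _ _)]
  simp only [hlap, add_comm]

theorem nrm_polarCoord_symm_sub_le (y : ℝ × ℝ) {r : ℝ} (hr : r ∈ Icc 0 s) (θ : ℝ) :
    nrm (y + polarCoord.symm (r, θ) - y) ≤ s := by
  rw [add_sub_cancel_left, nrm_polarCoord_symm, abs_of_nonneg hr.1]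
  exact hr.2

theorem monotoneOn_angularIntegral (hg : ContDiff ℝ 2 g)
    (hlap : ∀ x, nrm (x - y) ≤ s → 0 ≤ lap g x) : MonotoneOn (angularIntegral g y) (Icc 0 s) := by
  have hflux : MonotoneOn (fun r => r * deriv (angularIntegral g y) r) (Icc 0 s) := by
    refine monotoneOn_of_hasDerivWithinAt_nonneg (convex_Icc 0 s)
      (HasDerivAt.continuousOn fun r _ => hasDerivAt_mul_deriv_angularIntegral hg y r)
      (fun r _ => (hasDerivAt_mul_deriv_angularIntegral hg y r).hasDerivWithinAt) fun r hr => ?_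
    refine mul_nonneg (interior_subset hr).1 (intervalIntegral.integral_nonneg ?_ fun θ _ => ?_)
    · linarith [pi_pos]
    · exact hlap _ (nrm_polarCoord_symm_sub_le y (interior_subset hr) θ)
  have hderiv (r : ℝ) := hasDerivAt_angularIntegral (hg.of_le one_le_two) y r
  refine monotoneOn_of_deriv_nonneg (convex_Icc 0 s)
    (HasDerivAt.continuousOn fun r _ => hderiv r)
    (fun r _ => (hderiv r).differentiableAt.differentiableWithinAt) fun r hr => ?_
  have hflux_nonneg := hflux ⟨le_rfl, (interior_subset hr).1.trans (interior_subset hr).2⟩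
    (interior_subset hr) (interior_subset hr).1
  rw [interior_Icc] at hr
  simp only [zero_mul] at hflux_nonneg
  exact nonneg_of_mul_nonneg_right hflux_nonneg hr.1

theorem two_pi_mul_le_angularIntegral (hg : ContDiff ℝ 2 g)
    (hlap : ∀ x, nrm (x - y) ≤ s → 0 ≤ lap g x) {r : ℝ} (hr : r ∈ Icc 0 s) :
    2 * π * g y ≤ angularIntegral g y r := by
  rw [← angularIntegral_zero]
  exact monotoneOn_angularIntegral hg hlap ⟨le_rfl, hr.1.trans hr.2⟩ hr hr.1

theorem indicator_disc_polarCoord_symm (g : ℝ × ℝ → ℝ) (y : ℝ × ℝ) (s : ℝ) {p : ℝ × ℝ}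
    (hp : p ∈ polarCoord.target) : p.1 • (disc y s).indicator g (y + polarCoord.symm p) =
      (Ioo 0 s ×ˢ Ioo (-π) π).indicator (fun p => p.1 * g (y + polarCoord.symm p)) p := by
  have hmem : y + polarCoord.symm p ∈ disc y s ↔ p ∈ Ioo 0 s ×ˢ Ioo (-π) π := by
    rw [disc, mem_ofPred_eq, add_sub_cancel_left, nrm_polarCoord_symm, abs_of_pos hp.1]
    exact ⟨fun h => ⟨⟨hp.1, h⟩, hp.2⟩, fun h => h.1.2⟩
  simp only [indicator, hmem, smul_eq_mul, mul_ite, mul_zero]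

theorem integral_disc_eq (hg : Continuous g) (y : ℝ × ℝ) (hs : 0 ≤ s) :
    ∫ x in disc y s, g x = ∫ r in 0..s, r * angularIntegral g y r := by
  have hsubset : Ioo 0 s ×ˢ Ioo (-π) π ⊆ polarCoord.target := fun p hp => ⟨hp.1.1, hp.2⟩
  have hcont : Continuous fun p : ℝ × ℝ => p.1 * g (y + polarCoord.symm p) := by fun_prop
  have hint : IntegrableOn (fun p : ℝ × ℝ => p.1 * g (y + polarCoord.symm p))
      (Ioo 0 s ×ˢ Ioo (-π) π) :=
    (hcont.continuousOn.integrableOn_compact (isCompact_Icc.prod isCompact_Icc)).mono_set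
      (prod_mono Ioo_subset_Icc_self Ioo_subset_Icc_self)
  rw [← integral_indicator (isOpen_disc y s).measurableSet, ← integral_add_left_eq_self _ y,
    ← integral_comp_polarCoord_symm, setIntegral_congr_fun polarCoord.open_target.measurableSet
      fun p hp => indicator_disc_polarCoord_symm g y s hp,
    setIntegral_indicator (measurableSet_Ioo.prod measurableSet_Ioo),
    inter_eq_self_of_subset_right hsubset, Measure.volume_eq_prod, setIntegral_prod _ hint,
    intervalIntegral.integral_of_le hs, integral_Ioc_eq_integral_Ioo]
  refine setIntegral_congr_fun measurableSet_Ioo fun r _ => ?_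
  simp only [angularIntegral, intervalIntegral.integral_of_le (neg_le_self pi_pos.le),
    integral_Ioc_eq_integral_Ioo, integral_const_mul]

theorem continuous_angularIntegral (hg : Continuous g) (y : ℝ × ℝ) :
    Continuous (angularIntegral g y) :=
  intervalIntegral.continuous_parametric_intervalIntegral_of_continuous' (by fun_prop) _ _

theorem integral_disc_nrm_sub_sq (y : ℝ × ℝ) (hs : 0 ≤ s) :
    ∫ x in disc y s, nrm (x - y) ^ 2 = π * s ^ 4 / 2 := by
  have hmean (r : ℝ) : r * angularIntegral (fun x => nrm (x - y) ^ 2) y r = 2 * π * r ^ 3 := by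
    simp only [angularIntegral, add_sub_cancel_left, nrm_polarCoord_symm, sq_abs,
      intervalIntegral.integral_const, smul_eq_mul]
    ring
  have hcont : Continuous fun x => nrm (x - y) ^ 2 := (continuous_nrm.comp (by fun_prop)).pow 2
  rw [integral_disc_eq hcont y hs]
  simp only [hmean, intervalIntegral.integral_const_mul, integral_pow]
  push_cast
  ring

theorem mul_le_integral_disc_of_lap_nonneg (hg : ContDiff ℝ 2 g) (hs : 0 ≤ s)
    (hlap : ∀ x, nrm (x - y) ≤ s → 0 ≤ lap g x) : π * s ^ 2 * g y ≤ ∫ x in disc y s, g x := by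
  have hcont := continuous_angularIntegral hg.continuous y
  rw [integral_disc_eq hg.continuous y hs]
  calc π * s ^ 2 * g y = ∫ r in 0..s, r * (2 * π * g y) := by
        rw [intervalIntegral.integral_mul_const, integral_id]
        ring
    _ ≤ ∫ r in 0..s, r * angularIntegral g y r :=
        intervalIntegral.integral_mono_on hs (Continuous.intervalIntegrable (by fun_prop) _ _)
          (Continuous.intervalIntegrable (by fun_prop) _ _) fun r hr =>
            mul_le_mul_of_nonneg_left (two_pi_mul_le_angularIntegral hg hlap hr) hr.1

theorem mul_le_integral_disc_of_neg_le_lap (hg : ContDiff ℝ 2 g) {K : ℝ} (hs : 0 ≤ s)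
    (hlap : ∀ x, nrm (x - y) ≤ s → -K ≤ lap g x) :
    π * s ^ 2 * g y ≤ (∫ x in disc y s, g x) + π * K * s ^ 4 / 8 := by
  have hsq := contDiff_const_mul_nrm_sub_sq (K / 4) y
  have hmean := mul_le_integral_disc_of_lap_nonneg (y := y) (hg.add hsq) hs fun x hx => by
    rw [lap_add hg.contDiffAt hsq.contDiffAt, lap_const_mul_nrm_sub_sq]
    linarith [hlap x hx]
  rw [integral_add (integrableOn_disc hg.continuous y s) (integrableOn_disc hsq.continuous y s),
    integral_const_mul, integral_disc_nrm_sub_sq y hs, sub_self, nrm_zero] at hmean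
  linarith

end MeanValue

section LocalEstimates

variable {y : ℝ × ℝ} {C : ℝ}

theorem le_four_mul_add_of_lap_mem_Icc {p : ℝ × ℝ → ℝ} {y' : ℝ × ℝ} {r : ℝ}
    (hp : ContDiff ℝ 2 p) (hr : 0 < r) (hnonneg : ∀ x, nrm (x - y) ≤ 2 * r → 0 ≤ p x)
    (hlap : ∀ x, nrm (x - y) ≤ 2 * r → lap p x ∈ Icc 0 C) (hy' : nrm (y' - y) ≤ r) :
    p y' ≤ 4 * p y + 2 * C * r ^ 2 := by
  have hinner (x : ℝ × ℝ) (hx : nrm (x - y') ≤ r) : nrm (x - y) ≤ 2 * r :=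
    (nrm_sub_le_of_le hx hy').trans_eq (two_mul r).symm
  have hsubset : disc y' r ⊆ disc y (2 * r) := fun x (hx : nrm (x - y') < r) =>
    (nrm_sub_lt_of_lt_of_le hx hy').trans_eq (two_mul r).symm
  have hlower : π * r ^ 2 * p y' ≤ ∫ x in disc y' r, p x :=
    mul_le_integral_disc_of_lap_nonneg hp hr.le fun x hx => (hlap x (hinner x hx)).1
  have hmono : ∫ x in disc y' r, p x ≤ ∫ x in disc y (2 * r), p x :=
    setIntegral_mono_set (integrableOn_disc hp.continuous y _)
      (ae_restrict_of_forall_mem (isOpen_disc y _).measurableSet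
        fun x (hx : nrm (x - y) < 2 * r) => hnonneg x hx.le) hsubset.eventuallyLE
  have hupper := mul_le_integral_disc_of_neg_le_lap (y := y) (s := 2 * r) (K := C) hp.neg
    (by positivity) fun x hx => by
      rw [lap_neg]
      exact neg_le_neg (hlap x hx).2
  simp only [integral_neg] at hupper
  refine le_of_mul_le_mul_left ?_ (by positivity : 0 < π * r ^ 2)
  linarith

theorem exists_disc_le_four_mul {ρ : ℝ × ℝ → ℝ} (hcont : ContinuousOn ρ {x | nrm (x - y) ≤ 1})
    (hnonneg : ∀ x, nrm (x - y) ≤ 1 → 0 ≤ ρ x) (hy : 0 < ρ y) :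
    ∃ z, ∃ s > 0, (∀ x, nrm (x - z) ≤ s → nrm (x - y) ≤ 1 - s ∧ ρ x ≤ 4 * ρ z) ∧
      ρ y ≤ 4 * s ^ 2 * ρ z := by
  have hdist : Continuous fun x => nrm (x - y) := continuous_nrm.comp (by fun_prop)
  have hcentre : nrm (y - y) = 0 := by rw [sub_self, nrm_zero]
  obtain ⟨z, hz, hzmax⟩ := (isCompact_setOf_nrm_sub_le y 1).exists_isMaxOn
    (f := fun x => (1 - nrm (x - y)) ^ 2 * ρ x) ⟨y, hcentre.trans_le zero_le_one⟩
    (((continuous_const.sub hdist).pow 2).continuousOn.mul hcont)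
  have hmax (x : ℝ × ℝ) (hx : nrm (x - y) ≤ 1) :
      (1 - nrm (x - y)) ^ 2 * ρ x ≤ (1 - nrm (z - y)) ^ 2 * ρ z := hzmax hx
  obtain ⟨s, hs⟩ : ∃ s, 1 - nrm (z - y) = 2 * s := ⟨_, (mul_div_cancel₀ _ two_ne_zero).symm⟩
  rw [hs] at hmax
  have hρy : ρ y ≤ 4 * s ^ 2 * ρ z := by
    have := hmax y (hcentre.trans_le zero_le_one)
    rw [hcentre] at this
    linarith
  have hs_nonneg : 0 ≤ s := by linarith [show nrm (z - y) ≤ 1 from hz]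
  have hs_pos : 0 < s := hs_nonneg.lt_of_ne <| by
    rintro rfl
    linarith
  refine ⟨z, s, hs_pos, fun x hx => ?_, hρy⟩
  have hxy : nrm (x - y) ≤ 1 - s := by
    linarith [nrm_sub_le_of_le hx (show nrm (z - y) ≤ 1 - 2 * s by linarith)]
  refine ⟨hxy, le_of_mul_le_mul_left ?_ (pow_pos hs_pos 2)⟩
  calc s ^ 2 * ρ x ≤ (1 - nrm (x - y)) ^ 2 * ρ x := by
        gcongr
        · exact hnonneg x (by linarith)
        · linarith
    _ ≤ s ^ 2 * (4 * ρ z) := by linarith [hmax x (by linarith)]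

theorem sq_mul_le_of_forall_mul_sq_le {e s I : ℝ} (hC : 0 < C) (he : 0 < e) (hs : 0 ≤ s)
    (hI : I < π / (8 * C))
    (h : ∀ t ∈ Icc 0 s, π * t ^ 2 * e ≤ I + 2 * π * C * e ^ 2 * t ^ 4) :
    s ^ 2 * e ≤ 2 / π * I := by
  -- At the critical `t`, where `4 * C * e * t ^ 2 = 1`, the bound would read `π / (8 * C) ≤ I`.
  have hsubcritical : 4 * C * e * s ^ 2 < 1 := by
    by_contra! hge
    set τ := 1 / (4 * C * e) with hτ
    have hτs : √τ ≤ s := by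
      rw [Real.sqrt_le_left hs, hτ, div_le_iff₀ (by positivity)]
      linarith
    have hcritical := h (√τ) ⟨Real.sqrt_nonneg _, hτs⟩
    rw [show √τ ^ 4 = (√τ ^ 2) ^ 2 by ring, Real.sq_sqrt (by positivity)] at hcritical
    have hgap : π * τ * e - 2 * π * C * e ^ 2 * τ ^ 2 = π / (8 * C) := by
      rw [hτ]
      field_simp
      norm_num
    linarith
  have habsorb : 2 * π * C * e ^ 2 * s ^ 4 ≤ π * s ^ 2 * e / 2 :=
    calc 2 * π * C * e ^ 2 * s ^ 4 = π * s ^ 2 * e / 2 * (4 * C * e * s ^ 2) := by ring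
      _ ≤ π * s ^ 2 * e / 2 := mul_le_of_le_one_right (by positivity) hsubcritical.le
  rw [div_mul_eq_mul_div, le_div_iff₀ pi_pos]
  linarith [h s ⟨hs, le_rfl⟩]

/-- Heinz's ε-regularity estimate for `-Δρ ≤ C ρ²`. -/
theorem le_integral_disc_of_neg_sq_le_lap {ρ : ℝ × ℝ → ℝ} (hρ : ContDiff ℝ 2 ρ) (hC : 0 < C)
    (hnonneg : ∀ x, nrm (x - y) ≤ 1 → 0 ≤ ρ x)
    (hlap : ∀ x, nrm (x - y) ≤ 1 → -(C * ρ x ^ 2) ≤ lap ρ x)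
    (hsmall : ∫ x in disc y 1, ρ x < π / (8 * C)) : ρ y ≤ 8 / π * ∫ x in disc y 1, ρ x := by
  have hnonneg_ae : 0 ≤ᵐ[volume.restrict (disc y 1)] ρ :=
    ae_restrict_of_forall_mem (isOpen_disc y 1).measurableSet
      fun x (hx : nrm (x - y) < 1) => hnonneg x hx.le
  have hcentre : nrm (y - y) ≤ 1 := by simp only [sub_self, nrm_zero, zero_le_one]
  rcases (hnonneg y hcentre).eq_or_lt with hy | hy
  · rw [← hy]
    exact mul_nonneg (by positivity) (setIntegral_nonneg_of_ae_restrict hnonneg_ae)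
  obtain ⟨z, s, hs, hz, hρy⟩ := exists_disc_le_four_mul hρ.continuous.continuousOn hnonneg hy
  have hρz : 0 < ρ z := by
    by_contra! hle
    nlinarith [mul_nonneg (sq_nonneg s) (neg_nonneg.2 hle)]
  have hmean (t : ℝ) (ht : t ∈ Icc 0 s) :
      π * t ^ 2 * ρ z ≤ (∫ x in disc y 1, ρ x) + 2 * π * C * ρ z ^ 2 * t ^ 4 := by
    have hmean_z := mul_le_integral_disc_of_neg_le_lap (y := z) (K := 16 * C * ρ z ^ 2) hρ ht.1
      fun x hx => by
        obtain ⟨hxy, hρx⟩ := hz x (hx.trans ht.2)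
        have hsq := pow_le_pow_left₀ (hnonneg x (by linarith)) hρx 2
        nlinarith [hlap x (by linarith)]
    have hsubset : disc z t ⊆ disc y 1 := fun x (hx : nrm (x - z) < t) =>
      (hz x (hx.le.trans ht.2)).1.trans_lt (by linarith)
    have hmono : ∫ x in disc z t, ρ x ≤ ∫ x in disc y 1, ρ x :=
      setIntegral_mono_set (integrableOn_disc hρ.continuous y 1) hnonneg_ae hsubset.eventuallyLE
    linarith
  calc ρ y ≤ 4 * (s ^ 2 * ρ z) := by linarith
    _ ≤ 4 * (2 / π * ∫ x in disc y 1, ρ x) :=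
        mul_le_mul_of_nonneg_left (sq_mul_le_of_forall_mul_sq_le hC hρz hs.le hsmall hmean)
          (by norm_num)
    _ = 8 / π * ∫ x in disc y 1, ρ x := by ring

end LocalEstimates

section LinearDecay

variable {H : ℝ × ℝ → ℝ}

theorem exists_forall_exists_lt_sub_mul_of_lap_nonpos (hH : ContDiff ℝ 2 H)
    (hlap : ∀ q, lap H q ≤ 0) (hper : ∀ t, Function.Periodic (fun θ => H (t, θ)) (2 * π))
    (hlim : Tendsto H (comap Prod.fst atTop) atBot) :
    ∃ C, ∃ k > 0, ∀ᶠ t in atTop, ∃ θ, H (t, θ) < C - k * t := by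
  obtain ⟨m, hm⟩ := ((hper 0).compact_of_continuous two_pi_pos.ne'
    (hH.continuous.comp (.prodMk_right 0))).bddBelow
  have hline : Tendsto (fun t : ℝ => (t, (0 : ℝ))) atTop (comap Prod.fst atTop) :=
    tendsto_comap_iff.2 tendsto_id
  obtain ⟨t₁, ht₁, hHt₁⟩ := ((eventually_gt_atTop 0).and
    ((hlim.comp hline).eventually_lt_atBot (m - 1))).exists
  refine ⟨m, 1 / t₁, by positivity, ?_⟩
  filter_upwards [eventually_gt_atTop t₁] with t ht
  by_contra! hge
  have hinterp := three_lines_of_lap_nonpos (q := (t₁, 0)) hH.continuous.continuousOn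
    (fun q _ => hH.contDiffAt) (fun q _ => hlap q) hper (fun θ => hm (mem_range_self θ)) hge
    ⟨ht₁.le, ht.le⟩
  have hslope : 1 / t₁ * t * t₁ = t := by field_simp
  simp only [Function.comp_apply] at hHt₁ hinterp
  nlinarith [mul_lt_mul_of_pos_left hHt₁ (ht₁.trans ht)]

theorem exists_eventually_le_sub_mul_of_lap_nonpos (hH : ContDiff ℝ 2 H)
    (hlap : ∀ q, lap H q ≤ 0) (hper : ∀ t, Function.Periodic (fun θ => H (t, θ)) (2 * π))
    (hlim : Tendsto H (comap Prod.fst atTop) atBot) {M : ℝ}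
    (hM : ∀ᶠ q in comap Prod.fst atTop, -M ≤ lap H q) :
    ∃ C, ∃ δ > 0, ∀ᶠ q in comap Prod.fst atTop, H q ≤ C - δ * q.1 := by
  obtain ⟨C, k, hk, hC⟩ := exists_forall_exists_lt_sub_mul_of_lap_nonpos hH hlap hper hlim
  obtain ⟨T, -, hT⟩ := (atTop_basis.comap Prod.fst).eventually_iff.1
    ((hlim.eventually_le_atBot 0).and hM)
  refine ⟨C / 4 + 8 * M, k / 4, by positivity, ?_⟩
  filter_upwards [tendsto_comap.eventually hC,
    tendsto_comap.eventually (eventually_ge_atTop (T + 8))] with ⟨t, θ⟩ ⟨θ', hθ'⟩ ht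
  obtain ⟨φ, hφ, hHφ⟩ := (hper t).exists_mem_Ico two_pi_pos θ' (θ - π)
  have hnear (x : ℝ × ℝ) (hx : nrm (x - (t, θ)) ≤ 2 * 4) : T ≤ x.1 := by
    linarith [(abs_le.1 (abs_fst_sub_le_of_nrm_sub_le hx)).1]
  have hharnack := le_four_mul_add_of_lap_mem_Icc (p := fun q => -H q) (y := (t, θ))
    (y' := (t, φ)) (C := M) hH.neg zero_lt_four
    (fun x hx => neg_nonneg.2 (hT (hnear x hx)).1)
    (fun x hx => by
      rw [lap_neg]
      exact ⟨neg_nonneg.2 (hlap x), neg_le.1 (hT (hnear x hx)).2⟩)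
    (by
      rw [nrm, Prod.mk_sub_mk, sub_self, zero_pow two_ne_zero, zero_add, Real.sqrt_sq_eq_abs,
        abs_le]
      constructor <;> linarith [hφ.1, hφ.2, pi_lt_four])
  simp only at hHφ hharnack ⊢
  linarith

end LinearDecay

section LiouvilleSystem

variable {ι : Type*} [Fintype ι] {A : Matrix ι ι ℝ} {ψ : ι → ℝ × ℝ → ℝ}

/-- The `C²` solutions on the whole plane of the Liouville system without singular weights,
`-Δψ_i = ∑ j, a_ij e^{ψ_j}`. In log-polar coordinates the singular system takes this form. -/
def IsLiouvilleSolution (A : Matrix ι ι ℝ) (ψ : ι → ℝ × ℝ → ℝ) : Prop :=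
  (∀ i, ContDiff ℝ 2 (ψ i)) ∧ ∀ i q, lap (ψ i) q = -∑ j, A i j * exp (ψ j q)

theorem sum_mul_exp_le {S : ℝ} (hS : ∀ i j, A i j ≤ S) (i : ι) (q : ℝ × ℝ) :
    ∑ j, A i j * exp (ψ j q) ≤ S * ∑ j, exp (ψ j q) := by
  rw [Finset.mul_sum]
  gcongr with j
  exact hS i j

theorem IsLiouvilleSolution.neg_mul_sq_le_lap (hψ : IsLiouvilleSolution A ψ) {S : ℝ}
    (hS : ∀ i j, A i j ≤ S) (q : ℝ × ℝ) :
    -(S * (∑ j, exp (ψ j q)) ^ 2) ≤ lap (fun p => ∑ j, exp (ψ j p)) q := by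
  rw [lap_sum fun j _ => (hψ.1 j).exp.contDiffAt]
  calc -(S * (∑ j, exp (ψ j q)) ^ 2) = ∑ i, exp (ψ i q) * -(S * ∑ j, exp (ψ j q)) := by
        rw [← Finset.sum_mul]
        ring
    _ ≤ ∑ i, exp (ψ i q) * lap (ψ i) q := by
        gcongr with i
        rw [hψ.2]
        exact neg_le_neg (sum_mul_exp_le hS i q)
    _ ≤ ∑ i, lap (fun p => exp (ψ i p)) q :=
        Finset.sum_le_sum fun i _ => exp_mul_lap_le_lap_exp (hψ.1 i).contDiffAt

theorem tendsto_zero_of_tendsto_integral_disc {ρ : ℝ × ℝ → ℝ} {l : Filter (ℝ × ℝ)} {S : ℝ}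
    (hρ : ContDiff ℝ 2 ρ) (hS : 0 < S) (hnonneg : ∀ x, 0 ≤ ρ x)
    (hlap : ∀ x, -(S * ρ x ^ 2) ≤ lap ρ x)
    (hlim : Tendsto (fun y => ∫ x in disc y 1, ρ x) l (𝓝 0)) : Tendsto ρ l (𝓝 0) := by
  have hbound : Tendsto (fun y => 8 / π * ∫ x in disc y 1, ρ x) l (𝓝 0) := by
    simpa only [mul_zero] using hlim.const_mul (8 / π)
  refine squeeze_zero' (.of_forall hnonneg) ?_ hbound
  filter_upwards [hlim.eventually_lt_const (by positivity : 0 < π / (8 * S))] with y hy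
  exact le_integral_disc_of_neg_sq_le_lap hρ hS (fun x _ => hnonneg x) (fun x _ => hlap x) hy

theorem IsLiouvilleSolution.tendsto_sum_exp (hψ : IsLiouvilleSolution A ψ)
    {l : Filter (ℝ × ℝ)} {S : ℝ} (hS : 0 < S) (hAS : ∀ i j, A i j ≤ S)
    (hlim : ∀ j, Tendsto (fun y => ∫ x in disc y 1, exp (ψ j x)) l (𝓝 0)) :
    Tendsto (fun q => ∑ j, exp (ψ j q)) l (𝓝 0) := by
  refine tendsto_zero_of_tendsto_integral_disc (ContDiff.sum fun j _ => (hψ.1 j).exp) hS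
    (fun q => by positivity) (hψ.neg_mul_sq_le_lap hAS) ?_
  have hintegral (y : ℝ × ℝ) :
      ∫ x in disc y 1, ∑ j, exp (ψ j x) = ∑ j, ∫ x in disc y 1, exp (ψ j x) :=
    integral_finsetSum _ fun j _ => integrableOn_disc (hψ.1 j).exp.continuous y 1
  simpa only [hintegral, Finset.sum_const_zero] using tendsto_finsetSum _ fun j _ => hlim j

theorem IsLiouvilleSolution.exists_eventually_le_sub_mul (hψ : IsLiouvilleSolution A ψ)
    (hA : ∀ i j, 0 ≤ A i j) (hper : ∀ i t, Function.Periodic (fun θ => ψ i (t, θ)) (2 * π))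
    (hlim : ∀ j, Tendsto (fun y => ∫ x in disc y 1, exp (ψ j x)) (comap Prod.fst atTop) (𝓝 0))
    (i : ι) : ∃ C, ∃ δ > 0, ∀ᶠ q in comap Prod.fst atTop, ψ i q ≤ C - δ * q.1 := by
  obtain ⟨S, hS, hAS⟩ : ∃ S > 0, ∀ i j, A i j ≤ S := by
    obtain ⟨S, hS⟩ := (finite_range fun p : ι × ι => A p.1 p.2).bddAbove
    exact ⟨max S 1, by positivity, fun i j =>
      (hS (mem_range_self (i, j))).trans (le_max_left S 1)⟩
  have hsum := hψ.tendsto_sum_exp hS hAS hlim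
  have hexp : Tendsto (fun q => exp (ψ i q)) (comap Prod.fst atTop) (𝓝 0) :=
    squeeze_zero (fun q => (exp_pos _).le) (fun q => Finset.single_le_sum
      (f := fun j => exp (ψ j q)) (fun j _ => (exp_pos _).le) (Finset.mem_univ i)) hsum
  refine exists_eventually_le_sub_mul_of_lap_nonpos (M := S) (hψ.1 i) (fun q => ?_) (hper i)
    (tendsto_exp_comp_nhds_zero.1 hexp) ?_
  · rw [hψ.2, neg_nonpos]
    exact Finset.sum_nonneg fun j _ => mul_nonneg (hA i j) (exp_pos _).le
  · filter_upwards [hsum.eventually_le_const one_pos] with q hq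
    rw [hψ.2, neg_le_neg_iff]
    exact (sum_mul_exp_le hAS i q).trans (mul_le_of_le_one_right hS.le hq)

end LiouvilleSystem

section Energy

theorem injOn_logPolar (c y : ℝ × ℝ) {s : ℝ} (hs : s ≤ π) : InjOn (logPolar c) (disc y s) := by
  intro p hp q hq hpq
  have hfst : p.1 = q.1 := by
    rw [← Real.exp_eq_exp, ← nrm_logPolar_sub c, ← nrm_logPolar_sub c, hpq]
  have hp_angle := abs_lt.1 ((abs_snd_sub_le_of_nrm_sub_le le_rfl).trans_lt hp)
  have hq_angle := abs_lt.1 ((abs_snd_sub_le_of_nrm_sub_le le_rfl).trans_lt hq)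
  simp only [logPolar, polarCoord_symm_apply, hfst, add_right_inj, Prod.mk.injEq,
    mul_eq_mul_left_iff, (exp_pos q.1).ne', or_false] at hpq
  have hcos : cos (p.2 - q.2) = 1 := by
    rw [cos_sub, hpq.1, hpq.2, ← sq, ← sq, cos_sq_add_sin_sq]
  refine Prod.ext hfst (sub_eq_zero.1 ((cos_eq_one_iff_of_lt_of_lt ?_ ?_).1 hcos)) <;> linarith

theorem hasFDerivAt_logPolar (c q : ℝ × ℝ) :
    HasFDerivAt (logPolar c) ((fderivPolarCoordSymm (exp q.1, q.2)).comp
      ((ContinuousLinearMap.toSpanSingleton ℝ (exp q.1)).prodMap (.id ℝ ℝ))) q :=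
  ((hasFDerivAt_polarCoord_symm (exp q.1, q.2)).comp q
    ((Real.hasDerivAt_exp q.1).hasFDerivAt.prodMap q (hasFDerivAt_id q.2))).const_add c

theorem det_fderiv_logPolar (q : ℝ × ℝ) :
    ((fderivPolarCoordSymm (exp q.1, q.2)).comp
      ((ContinuousLinearMap.toSpanSingleton ℝ (exp q.1)).prodMap (.id ℝ ℝ))).det =
      exp (2 * q.1) := by
  have hradial : ((ContinuousLinearMap.toSpanSingleton ℝ (exp q.1)).prodMap
      (ContinuousLinearMap.id ℝ ℝ)).det = exp q.1 := by
    rw [ContinuousLinearMap.det, ContinuousLinearMap.coe_prodMap, LinearMap.det_prodMap]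
    simp
  rw [ContinuousLinearMap.det, ContinuousLinearMap.toLinearMap_comp, LinearMap.det_comp,
    ← ContinuousLinearMap.det, ← ContinuousLinearMap.det, det_fderivPolarCoordSymm, hradial,
    two_mul, exp_add]

theorem integral_image_logPolar (c y : ℝ × ℝ) {s : ℝ} (hs : s ≤ π) (g : ℝ × ℝ → ℝ) :
    ∫ x in logPolar c '' disc y s, g x = ∫ q in disc y s, exp (2 * q.1) * g (logPolar c q) := by
  rw [integral_image_eq_integral_abs_det_fderiv_smul volume (isOpen_disc y s).measurableSet
    (fun q _ => (hasFDerivAt_logPolar c q).hasFDerivWithinAt) (injOn_logPolar c y hs)]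
  simp only [det_fderiv_logPolar, Real.abs_exp, smul_eq_mul]

theorem tendsto_setIntegral_le_nrm {g : ℝ × ℝ → ℝ} (hg : Integrable g) :
    Tendsto (fun r : ℝ => ∫ x in {x | r ≤ nrm x}, g x) atTop (𝓝 0) := by
  have hlim := tendsto_setIntegral_of_antitone (s := fun r : ℝ => {x | r ≤ nrm x})
    (fun r => (isClosed_le continuous_const continuous_nrm).measurableSet)
    (fun r s hrs x (hx : s ≤ nrm x) => hrs.trans hx) ⟨0, hg.integrableOn⟩
  have hempty : ⋂ r : ℝ, {x | r ≤ nrm x} = ∅ := eq_empty_of_forall_notMem fun x hx =>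
    (lt_add_one (nrm x)).not_ge (mem_iInter.1 hx (nrm x + 1))
  simpa only [hempty, setIntegral_empty] using hlim

theorem tendsto_integral_disc_comp_logPolar {g : ℝ × ℝ → ℝ} (hg : Integrable g)
    (hnonneg : ∀ x, 0 ≤ g x) :
    Tendsto (fun y => ∫ q in disc y 1, exp (2 * q.1) * g (logPolar 0 q))
      (comap Prod.fst atTop) (𝓝 0) := by
  have hradius : Tendsto (fun y : ℝ × ℝ => exp (y.1 - 1)) (comap Prod.fst atTop) atTop :=
    tendsto_exp_atTop.comp ((tendsto_atTop_add_const_right _ (-1) tendsto_id).comp tendsto_comap)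
  refine squeeze_zero (fun y => ?_) (fun y => ?_) ((tendsto_setIntegral_le_nrm hg).comp hradius)
  · exact setIntegral_nonneg (isOpen_disc y 1).measurableSet
      fun q _ => mul_nonneg (exp_pos _).le (hnonneg _)
  · rw [← integral_image_logPolar 0 y (by linarith [pi_gt_three])]
    refine setIntegral_mono_set hg.integrableOn (.of_forall hnonneg)
      (LE.le.eventuallyLE (image_subset_iff.2 fun q (hq : nrm (q - y) < 1) => ?_))
    rw [mem_preimage, mem_ofPred_eq, nrm_logPolar_zero, exp_le_exp]
    linarith [(abs_le.1 (abs_fst_sub_le_of_nrm_sub_le hq.le)).1]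

end Energy

section Decay

theorem eventually_comap_nrm_of_logPolar {P : ℝ × ℝ → Prop}
    (h : ∀ᶠ q in comap Prod.fst atTop, P (logPolar 0 q)) : ∀ᶠ x in comap nrm atTop, P x := by
  obtain ⟨T, -, hT⟩ := (atTop_basis.comap Prod.fst).eventually_iff.1 h
  filter_upwards [tendsto_comap.eventually (eventually_ge_atTop (exp T))] with x hx
  obtain ⟨q, rfl⟩ := exists_logPolar_zero_eq (x := x) <| by
    rintro rfl
    exact (exp_pos T).not_ge (hx.trans_eq nrm_zero)
  rw [nrm_logPolar_zero, exp_le_exp] at hx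
  exact hT hx

/-- A function in log-polar coordinates about the origin, shifted so that
`e^(2t) |x|^b e^(v x) = e^(logPolarLift b v (t, θ))`. -/
noncomputable def logPolarLift (b : ℝ) (v : ℝ × ℝ → ℝ) (q : ℝ × ℝ) : ℝ :=
  v (logPolar 0 q) + (2 + b) * q.1

theorem exp_logPolarLift (b : ℝ) (v : ℝ × ℝ → ℝ) (q : ℝ × ℝ) :
    exp (logPolarLift b v q) =
      exp (2 * q.1) * (nrm (logPolar 0 q) ^ b * exp (v (logPolar 0 q))) := by
  rw [nrm_logPolar_zero, ← exp_mul, ← exp_add, ← exp_add, logPolarLift]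
  ring_nf

theorem isBigO_rpow_of_logPolarLift_le {b C δ : ℝ} {v : ℝ × ℝ → ℝ}
    (h : ∀ᶠ q in comap Prod.fst atTop, logPolarLift b v q ≤ C - δ * q.1) :
    (fun x => nrm x ^ b * exp (v x)) =O[comap nrm atTop] fun x => nrm x ^ (-2 - δ) := by
  refine .of_bound (exp C) (eventually_comap_nrm_of_logPolar ?_)
  filter_upwards [h] with q hq
  have hle := exp_le_exp.2 hq
  rw [exp_logPolarLift] at hle
  have hpos : 0 < exp (2 * q.1) := exp_pos _
  rw [Real.norm_of_nonneg (mul_nonneg (Real.rpow_nonneg (nrm_nonneg _) _) (exp_pos _).le),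
    Real.norm_of_nonneg (Real.rpow_nonneg (nrm_nonneg _) _)]
  refine le_of_mul_le_mul_left (hle.trans_eq ?_) hpos
  rw [nrm_logPolar_zero, ← exp_mul, ← exp_add, ← exp_add]
  ring_nf

theorem PDESolution.isLiouvilleSolution_logPolarLift {n : ℕ} {A : Matrix (Fin n) (Fin n) ℝ}
    {β : Fin n → ℝ} {u : Fin n → ℝ × ℝ → ℝ} (hu : PDESolution A β u) :
    IsLiouvilleSolution A fun i => logPolarLift (β i) (u i) := by
  obtain ⟨-, hC2, heq, -⟩ := hu
  have hcomp (i : Fin n) : ContDiff ℝ 2 fun q => u i (logPolar 0 q) :=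
    contDiff_iff_contDiffAt.2 fun q =>
      (hC2 i _ (logPolar_ne 0 q)).comp q (contDiff_logPolar 0).contDiffAt
  refine ⟨fun i => (hcomp i).add (by fun_prop), fun i q => ?_⟩
  have hlinear : lap (fun p : ℝ × ℝ => (2 + β i) * p.1) q = 0 := by
    rw [lap_comp_fst fun t => (2 + β i) * t]
    simp
  simp only [exp_logPolarLift]
  unfold logPolarLift
  rw [lap_add (hcomp i).contDiffAt (by fun_prop), hlinear,
    lap_comp_logPolar (hC2 i _ (logPolar_ne 0 q)),
    eq_neg_of_add_eq_zero_left (heq i _ (logPolar_ne 0 q)), add_zero, mul_neg, Finset.mul_sum]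
  congr 1
  refine Finset.sum_congr rfl fun j _ => ?_
  ring

theorem PDESolution.exists_isBigO_rpow {n : ℕ} {A : Matrix (Fin n) (Fin n) ℝ} {β : Fin n → ℝ}
    {u : Fin n → ℝ × ℝ → ℝ} (hu : PDESolution A β u) (hA : ∀ i j, 0 ≤ A i j) (i : Fin n) :
    ∃ δ > (0 : ℝ), (fun x => nrm x ^ β i * exp (u i x)) =O[comap nrm atTop]
      fun x => nrm x ^ (-2 - δ) := by
  have henergy (j : Fin n) := tendsto_integral_disc_comp_logPolar (hu.2.2.2 j)
    fun x => mul_nonneg (Real.rpow_nonneg (nrm_nonneg x) _) (exp_pos _).le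
  simp only [← exp_logPolarLift] at henergy
  obtain ⟨C, δ, hδ, h⟩ := hu.isLiouvilleSolution_logPolarLift.exists_eventually_le_sub_mul hA
    (fun j t θ => by simp only [logPolarLift, logPolar_add_two_pi]) henergy i
  exact ⟨δ, hδ, isBigO_rpow_of_logPolarLift_le h⟩

end Decay

section LogLogWeight

/-- The slowly growing weight `f` dividing the differences `w_i^λ`. -/
noncomputable def logLogWeight (x : ℝ × ℝ) : ℝ := log (log (nrm x + 3))

theorem one_lt_log_add_three {r : ℝ} (hr : 0 ≤ r) : 1 < log (r + 3) := by
  rw [Real.lt_log_iff_exp_lt (by linarith)]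
  linarith [exp_one_lt_three]

theorem logLogWeight_pos (x : ℝ × ℝ) : 0 < logLogWeight x :=
  Real.log_pos (one_lt_log_add_three (nrm_nonneg x))

theorem continuous_logLogWeight : Continuous logLogWeight := by
  have hnrm := continuous_nrm
  refine Continuous.log (Continuous.log (by fun_prop) fun x => ?_) fun x => ?_
  · linarith [nrm_nonneg x]
  · linarith [one_lt_log_add_three (nrm_nonneg x)]

variable {x : ℝ × ℝ}

theorem contDiffAt_logLogWeight (hx : x ≠ 0) : ContDiffAt ℝ 2 logLogWeight x := by
  have hpos := nrm_pos hx
  have hnrm : ContDiffAt ℝ 2 nrm x := by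
    refine ContDiffAt.sqrt (by fun_prop) ?_
    rw [← nrm_sq]
    positivity
  refine ContDiffAt.log (ContDiffAt.log (hnrm.add contDiffAt_const) ?_) ?_
  · linarith
  · linarith [one_lt_log_add_three hpos.le]

theorem deriv_deriv_log_log_exp_add_three (t : ℝ) :
    deriv (deriv fun s => log (log (exp s + 3))) t =
      exp t * (3 * log (exp t + 3) - exp t) / ((exp t + 3) ^ 2 * log (exp t + 3) ^ 2) := by
  have hlog (s : ℝ) : log (exp s + 3) ≠ 0 := by linarith [one_lt_log_add_three (exp_pos s).le]
  have hlog_deriv (s : ℝ) :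
      HasDerivAt (fun s => log (exp s + 3)) (exp s / (exp s + 3)) s :=
    ((Real.hasDerivAt_exp s).add_const 3).log (by positivity)
  have hderiv : (deriv fun s => log (log (exp s + 3))) =
      fun s => exp s / (exp s + 3) / log (exp s + 3) :=
    funext fun s => ((hlog_deriv s).log (hlog s)).deriv
  rw [hderiv, ((((Real.hasDerivAt_exp t).fun_div ((Real.hasDerivAt_exp t).add_const 3)
    (by positivity)).fun_div (hlog_deriv t) (hlog t))).deriv]
  have := hlog t
  field_simp
  ring

theorem lap_logLogWeight (hx : x ≠ 0) :
    lap logLogWeight x =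
      (3 * log (nrm x + 3) - nrm x) / (nrm x * (nrm x + 3) ^ 2 * log (nrm x + 3) ^ 2) := by
  obtain ⟨q, rfl⟩ := exists_logPolar_zero_eq hx
  have hcomp := lap_comp_logPolar (contDiffAt_logLogWeight hx)
  simp only [logLogWeight, nrm_logPolar_zero] at hcomp
  rw [lap_comp_fst fun t => log (log (exp t + 3)), deriv_deriv_log_log_exp_add_three, two_mul,
    exp_add] at hcomp
  have hlog : log (exp q.1 + 3) ≠ 0 := by linarith [one_lt_log_add_three (exp_pos q.1).le]
  refine mul_left_cancel₀ (by positivity : exp q.1 * exp q.1 ≠ 0) (hcomp.symm.trans ?_)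
  rw [nrm_logPolar_zero]
  field_simp

theorem continuousAt_lap_logLogWeight (hx : x ≠ 0) : ContinuousAt (lap logLogWeight) x := by
  have hnrm := continuous_nrm.continuousAt (x := x)
  have hpos := nrm_pos hx
  have hlog := one_lt_log_add_three hpos.le
  have hlog_cont : ContinuousAt (fun x => log (nrm x + 3)) x :=
    ContinuousAt.log (by fun_prop) (by linarith)
  have hformula : ContinuousAt (fun x => (3 * log (nrm x + 3) - nrm x) /
      (nrm x * (nrm x + 3) ^ 2 * log (nrm x + 3) ^ 2)) x :=
    ContinuousAt.div (by fun_prop) (by fun_prop) (by positivity)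
  refine hformula.congr ?_
  filter_upwards [isOpen_ne.mem_nhds hx] with y hy using (lap_logLogWeight hy).symm

theorem log_add_three_le {r : ℝ} (hr : 3 ≤ r) : log (r + 3) ≤ 2 * log r :=
  calc log (r + 3) ≤ log (r ^ 2) := Real.log_le_log (by linarith) (by nlinarith)
    _ = 2 * log r := by rw [Real.log_pow, Nat.cast_ofNat]

theorem isBigO_logLogWeight : logLogWeight =O[comap nrm atTop] fun x => log (nrm x) := by
  refine .of_bound 2 ?_
  filter_upwards [tendsto_comap.eventually (eventually_ge_atTop 3)] with x hx
  have hlog := one_lt_log_add_three (nrm_nonneg x)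
  rw [Real.norm_of_nonneg (logLogWeight_pos x).le,
    Real.norm_of_nonneg (Real.log_nonneg (by linarith))]
  calc logLogWeight x ≤ log (nrm x + 3) := Real.log_le_self (by linarith)
    _ ≤ 2 * log (nrm x) := log_add_three_le hx

theorem isLittleO_rpow_mul_log {δ : ℝ} (hδ : 0 < δ) :
    (fun r : ℝ => r ^ (-2 - δ) * log r) =o[atTop] fun r => (r ^ 2 * log r ^ 2)⁻¹ := by
  have hlog := (isLittleO_log_rpow_rpow_atTop 3 hδ).mul_isBigO
    (isBigO_refl (fun r : ℝ => r ^ (-2 - δ) * (log r ^ 2)⁻¹) atTop)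
  refine hlog.congr' ?_ ?_ <;>
    filter_upwards [eventually_gt_atTop 1] with r hr <;>
    have hr0 : 0 < r := zero_lt_one.trans hr <;>
    have hlogr : 0 < log r := Real.log_pos hr
  · rw [show (3 : ℝ) = (3 : ℕ) by norm_num, Real.rpow_natCast]
    field_simp
  · rw [← mul_assoc, ← Real.rpow_add hr0, add_sub_cancel, Real.rpow_neg hr0.le, mul_inv]
    norm_num

theorem isLittleO_mul_logLogWeight {V : ℝ × ℝ → ℝ} {δ : ℝ} (hδ : 0 < δ)
    (hV : V =O[comap nrm atTop] fun x => nrm x ^ (-2 - δ)) :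
    (fun x => V x * logLogWeight x) =o[comap nrm atTop]
      fun x => (nrm x ^ 2 * log (nrm x) ^ 2)⁻¹ :=
  (hV.mul isBigO_logLogWeight).trans_isLittleO
    ((isLittleO_rpow_mul_log hδ).comp_tendsto tendsto_comap)

theorem eventually_lap_logLogWeight_le : ∀ᶠ x in comap nrm atTop,
    lap logLogWeight x ≤ -(1 / 32 * (nrm x ^ 2 * log (nrm x) ^ 2)⁻¹) := by
  have hlog_small : ∀ᶠ r : ℝ in atTop, ‖log r‖ ≤ 1 / 12 * ‖r‖ :=
    Real.isLittleO_log_id_atTop.bound (by norm_num)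
  filter_upwards [tendsto_comap.eventually (hlog_small.and (eventually_ge_atTop 3))]
    with x ⟨hsmall, hr3⟩
  have hx : x ≠ 0 := by
    rintro rfl
    norm_num [nrm_zero] at hr3
  rw [lap_logLogWeight hx]
  set r := nrm x
  set L := log (r + 3)
  have hlog : 0 < log r := Real.log_pos (by linarith)
  have hL : 1 < L := one_lt_log_add_three (by linarith)
  have hL2 : L ≤ 2 * log r := log_add_three_le hr3
  rw [Real.norm_of_nonneg hlog.le, Real.norm_of_nonneg (by linarith)] at hsmall
  have hden : (r + 3) ^ 2 * L ^ 2 ≤ (2 * r) ^ 2 * (2 * log r) ^ 2 := by gcongr; linarith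
  calc (3 * L - r) / (r * (r + 3) ^ 2 * L ^ 2)
      ≤ -(r / 2) / (r * (r + 3) ^ 2 * L ^ 2) := by gcongr; linarith
    _ = -(1 / 2 * ((r + 3) ^ 2 * L ^ 2)⁻¹) := by field_simp
    _ ≤ -(1 / 2 * ((2 * r) ^ 2 * (2 * log r) ^ 2)⁻¹) := by gcongr
    _ = -(1 / 32 * (r ^ 2 * log r ^ 2)⁻¹) := by
        field_simp
        norm_num

theorem eventually_mul_logLogWeight_add_lap_neg {V : ℝ × ℝ → ℝ}
    (hV : (fun x => V x * logLogWeight x) =o[comap nrm atTop]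
      fun x => (nrm x ^ 2 * log (nrm x) ^ 2)⁻¹) :
    ∀ᶠ x in comap nrm atTop, V x * logLogWeight x + lap logLogWeight x < 0 := by
  filter_upwards [hV.bound (by norm_num : (0 : ℝ) < 1 / 64), eventually_lap_logLogWeight_le,
    tendsto_comap.eventually (eventually_gt_atTop 1)] with x hVx hlap hr
  have hlog : 0 < log (nrm x) := Real.log_pos hr
  have hpos : 0 < (nrm x ^ 2 * log (nrm x) ^ 2)⁻¹ := by positivity
  rw [Real.norm_of_nonneg hpos.le] at hVx
  linarith [Real.le_norm_self (V x * logLogWeight x)]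

end LogLogWeight

section Reflection

/-- Reflection in the line `x₁ = ℓ`. -/
def reflect (ℓ : ℝ) (x : ℝ × ℝ) : ℝ × ℝ := (2 * ℓ - x.1, x.2)

theorem contDiff_reflect (ℓ : ℝ) : ContDiff ℝ 2 (reflect ℓ) := by
  unfold reflect
  fun_prop

theorem eventually_reflect_ne (ℓ : ℝ) (x p : ℝ × ℝ) : ∀ᶠ y in 𝓝[≠] x, reflect ℓ y ≠ p := by
  have hinv (y : ℝ × ℝ) (hy : reflect ℓ y = p) : y = reflect ℓ p := by
    rw [← hy]
    simp [reflect]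
  by_cases hx : x = reflect ℓ p
  · filter_upwards [self_mem_nhdsWithin] with y hy h
    exact hy ((hinv y h).trans hx.symm)
  · filter_upwards [nhdsWithin_le_nhds (isOpen_ne.mem_nhds hx)] with y hy h using hy (hinv y h)

theorem nrm_reflect_le {ℓ : ℝ} {x : ℝ × ℝ} (hℓ : 0 ≤ ℓ) (hx : ℓ ≤ x.1) :
    nrm (reflect ℓ x) ≤ nrm x := by
  refine Real.sqrt_le_sqrt ?_
  simp only [reflect]
  nlinarith

theorem lap_comp_reflect (ℓ : ℝ) (v : ℝ × ℝ → ℝ) (x : ℝ × ℝ) :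
    lap (fun y => v (reflect ℓ y)) x = lap v (reflect ℓ x) := by
  simp only [lap_eq_iteratedDeriv, reflect]
  rw [iteratedDeriv_comp_const_sub 2 (fun s => v (s, x.2))]
  simp

end Reflection

section MovingPlanes

variable {n : ℕ} {A : Matrix (Fin n) (Fin n) ℝ} {β : Fin n → ℝ} {u : Fin n → ℝ × ℝ → ℝ} {ℓ : ℝ}
  {i : Fin n} {x : ℝ × ℝ}

/-- The upper bound for `Δ w_i^ℓ` obtained by moving the singular weight of the reflected
solution from the reflected point to `x`. -/
noncomputable def reflectionSource (A : Matrix (Fin n) (Fin n) ℝ) (β : Fin n → ℝ)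
    (u : Fin n → ℝ × ℝ → ℝ) (ℓ : ℝ) (i : Fin n) (x : ℝ × ℝ) : ℝ :=
  ∑ j, A i j * (nrm x ^ β j * (exp (u j x) - exp (u j (reflect ℓ x))))

theorem continuousAt_reflectionSource (hu : ∀ j, Continuous (u j)) (hx : x ≠ 0) :
    ContinuousAt (reflectionSource A β u ℓ i) x := by
  refine tendsto_finsetSum _ fun j _ => continuousAt_const.mul (ContinuousAt.mul ?_ ?_)
  · exact continuous_nrm.continuousAt.rpow_const (.inl (nrm_pos hx).ne')
  · exact ((hu j).rexp.sub ((hu j).comp (contDiff_reflect ℓ).continuous).rexp).continuousAt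

theorem reflectionSource_le (hA : ∀ i j, 0 ≤ A i j) {s : ℝ}
    (hs : ∀ j, s ≤ u j (reflect ℓ x) - u j x) :
    reflectionSource A β u ℓ i x ≤ -s * ∑ j, A i j * (nrm x ^ β j * exp (u j x)) := by
  rw [Finset.mul_sum]
  refine Finset.sum_le_sum fun j _ => ?_
  have hexp : exp (u j x) - exp (u j (reflect ℓ x)) ≤ -s * exp (u j x) := by
    have htangent := Real.add_one_le_exp (u j (reflect ℓ x) - u j x)
    rw [exp_sub, le_div_iff₀ (exp_pos _)] at htangent
    nlinarith [exp_pos (u j x), hs j]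
  calc A i j * (nrm x ^ β j * (exp (u j x) - exp (u j (reflect ℓ x))))
      ≤ A i j * (nrm x ^ β j * (-s * exp (u j x))) := by
        gcongr
        · exact hA i j
        · exact Real.rpow_nonneg (nrm_nonneg x) _
    _ = -s * (A i j * (nrm x ^ β j * exp (u j x))) := by ring

theorem PDESolution.lap_eq (hu : PDESolution A β u) (hx : x ≠ 0) :
    lap (u i) x = -∑ j, A i j * (nrm x ^ β j * exp (u j x)) := by
  simpa only [mul_assoc] using eq_neg_of_add_eq_zero_left (hu.2.2.1 i x hx)

theorem PDESolution.contDiffAt_comp_reflect (hu : PDESolution A β u) (hx : reflect ℓ x ≠ 0) :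
    ContDiffAt ℝ 2 (fun y => u i (reflect ℓ y)) x :=
  (hu.2.1 i _ hx).comp x (contDiff_reflect ℓ).contDiffAt

theorem PDESolution.lap_reflect_sub_le (hu : PDESolution A β u) (hA : ∀ i j, 0 ≤ A i j)
    (hβ : ∀ j, β j ≤ 0) (hℓ : 0 ≤ ℓ) (hxℓ : ℓ ≤ x.1) (hx : x ≠ 0) (hxr : reflect ℓ x ≠ 0) :
    lap (fun y => u i (reflect ℓ y) - u i y) x ≤ reflectionSource A β u ℓ i x := by
  rw [lap_sub (hu.contDiffAt_comp_reflect hxr) (hu.2.1 i x hx), lap_comp_reflect, hu.lap_eq hx,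
    hu.lap_eq hxr, neg_sub_neg, ← Finset.sum_sub_distrib, reflectionSource]
  simp only [← mul_sub]
  gcongr with j
  · exact hA i j
  rw [mul_sub]
  exact sub_le_sub_left (mul_le_mul_of_nonneg_right
    (Real.rpow_le_rpow_of_nonpos (nrm_pos hxr) (nrm_reflect_le hℓ hxℓ) (hβ j)) (exp_pos _).le) _

theorem PDESolution.sum_mul_logLogWeight_add_lap_nonneg (hu : PDESolution A β u)
    (hA : ∀ i j, 0 ≤ A i j) (hβ : ∀ j, β j ≤ 0) (hℓ : 0 ≤ ℓ) {z : ℝ} (hz : z < 0)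
    (hxℓ : ℓ < x.1)
    (hle : ∀ y : ℝ × ℝ, ℓ < y.1 → ∀ j, z * logLogWeight y ≤ u j (reflect ℓ y) - u j y)
    (heq : u i (reflect ℓ x) - u i x = z * logLogWeight x) :
    0 ≤ (∑ j, A i j * (nrm x ^ β j * exp (u j x))) * logLogWeight x + lap logLogWeight x := by
  by_contra! hneg
  have hne (y : ℝ × ℝ) (hy : ℓ < y.1) : y ≠ 0 := by
    rintro rfl
    exact hℓ.not_gt hy
  set Q : ℝ × ℝ → ℝ := fun y => reflectionSource A β u ℓ i y - z * lap logLogWeight y with hQ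
  have hQx : Q x < 0 := by
    have := reflectionSource_le (β := β) (i := i) hA (hle x hxℓ)
    simp only [hQ]
    nlinarith [mul_pos_of_neg_of_neg hz hneg]
  have hQcont : ContinuousAt Q x := (continuousAt_reflectionSource hu.1 (hne x hxℓ)).sub
    (continuousAt_const.mul (continuousAt_lap_logLogWeight (hne x hxℓ)))
  have hhalf : ∀ᶠ y : ℝ × ℝ in 𝓝 x, ℓ < y.1 :=
    continuous_fst.continuousAt.eventually (lt_mem_nhds hxℓ)
  have hpos : 0 < u i (reflect ℓ x) - u i x - z * logLogWeight x := by
    refine pos_of_lap_le_neg_of_punctured (c := -(Q x / 2))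
      (g := fun y => u i (reflect ℓ y) - u i y - z * logLogWeight y) (by linarith) ?_ ?_ ?_
    · exact ((((hu.1 i).comp (contDiff_reflect ℓ).continuous).sub (hu.1 i)).sub
        (continuous_const.mul continuous_logLogWeight)).continuousAt
    · filter_upwards [hhalf] with y hy using sub_nonneg.2 (hle y hy i)
    -- Removing `x` matters when `x` is the reflected singularity `(2 * ℓ, 0)`.
    · filter_upwards [nhdsWithin_le_nhds hhalf, eventually_reflect_ne ℓ x 0, nhdsWithin_le_nhds
        (hQcont.eventually_lt_const (by linarith : Q x < Q x / 2))] with y hy hyr hQy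
      have hdiff : ContDiffAt ℝ 2 (fun y => u i (reflect ℓ y) - u i y) y :=
        (hu.contDiffAt_comp_reflect hyr).sub (hu.2.1 i y (hne y hy))
      have hweight : ContDiffAt ℝ 2 (fun y => z * logLogWeight y) y :=
        contDiffAt_const.mul (contDiffAt_logLogWeight (hne y hy))
      refine ⟨hdiff.sub hweight, ?_⟩
      rw [lap_sub hdiff hweight, lap_const_mul, neg_neg]
      exact (sub_le_sub_right (hu.lap_reflect_sub_le hA hβ hℓ hy.le (hne y hy) hyr) _).trans hQy.le
  exact hpos.ne' (sub_eq_zero.2 heq)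

theorem PDESolution.eventually_sum_mul_logLogWeight_add_lap_neg (hu : PDESolution A β u)
    (hA : ∀ i j, 0 ≤ A i j) : ∀ᶠ x in comap nrm atTop, ∀ i,
      (∑ j, A i j * (nrm x ^ β j * exp (u j x))) * logLogWeight x + lap logLogWeight x < 0 := by
  refine eventually_all.2 fun i => eventually_mul_logLogWeight_add_lap_neg ?_
  simp only [Finset.sum_mul, mul_assoc (A i _)]
  refine IsLittleO.fun_sum fun j _ => ?_
  obtain ⟨δ, hδ, hO⟩ := hu.exists_isBigO_rpow hA j
  exact (isLittleO_mul_logLogWeight hδ hO).const_mul_left (A i j)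

end MovingPlanes

theorem negative_minimum_in_bounded_region_general {n : ℕ} (A : Matrix (Fin n) (Fin n) ℝ)
    (β : Fin n → ℝ) (hA : ∀ i j, 0 ≤ A i j) (hβ : ∀ i, β i ≤ 0)
    (u : Fin n → ℝ × ℝ → ℝ) (hu : PDESolution A β u) :
    ∃ R > (0:ℝ), ∀ ℓ > (0:ℝ), ∀ x₀ : ℝ × ℝ, ℓ < x₀.1 →
      (∃ i,
        (u i (2 * ℓ - x₀.1, x₀.2) - u i x₀) / Real.log (Real.log (nrm x₀ + 3)) < 0 ∧
        ∀ x : ℝ × ℝ, ℓ < x.1 → ∀ j,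
          (u i (2 * ℓ - x₀.1, x₀.2) - u i x₀) / Real.log (Real.log (nrm x₀ + 3)) ≤
          (u j (2 * ℓ - x.1, x.2) - u j x) / Real.log (Real.log (nrm x + 3))) →
      nrm x₀ < R := by
  obtain ⟨R, hR, hneg⟩ := (atTop_basis' 1 |>.comap nrm).eventually_iff.1
    (hu.eventually_sum_mul_logLogWeight_add_lap_neg hA)
  refine ⟨R, zero_lt_one.trans_le hR, fun ℓ hℓ x₀ hx₀ ⟨i, hz, hmin⟩ => ?_⟩
  by_contra! hfar
  refine (hneg hfar i).not_ge (hu.sum_mul_logLogWeight_add_lap_nonneg hA hβ hℓ.le hz hx₀ ?_ ?_)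
  · exact fun x hx j => (le_div_iff₀ (logLogWeight_pos x)).1 (hmin x hx j)
  · exact (div_mul_cancel₀ _ (logLogWeight_pos x₀).ne').symm

theorem negative_minimum_in_bounded_region {n : ℕ} (hn : 0 < n)
    (A : Matrix (Fin n) (Fin n) ℝ) (β : Fin n → ℝ)
    (hA : H1 A) (hβ : ∀ i, -2 < β i ∧ β i ≤ 0) (hβ0 : ∃ i, β i ≠ 0)
    (u : Fin n → ℝ × ℝ → ℝ) (hu : PDESolution A β u) :
    ∃ R > (0:ℝ), ∀ ℓ > (0:ℝ), ∀ x₀ : ℝ × ℝ, ℓ < x₀.1 →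
      (∃ i,
        (u i (2 * ℓ - x₀.1, x₀.2) - u i x₀) / Real.log (Real.log (nrm x₀ + 3)) < 0 ∧
        ∀ x : ℝ × ℝ, ℓ < x.1 → ∀ j,
          (u i (2 * ℓ - x₀.1, x₀.2) - u i x₀) / Real.log (Real.log (nrm x₀ + 3)) ≤
          (u j (2 * ℓ - x.1, x.2) - u j x) / Real.log (Real.log (nrm x + 3))) →
      nrm x₀ < R :=
  negative_minimum_in_bounded_region_general A β hA.2.1 (fun i => (hβ i).2) u hu
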